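/- arXiv:0704.0028 — 7 statements merged into one kernel-verified Lean document; each statement's English description precedes it below -/
import Mathlib

section
/- Let A and B be symmetric real n×n matrices with B positive semi-definite, and let h_t be the coefficients defined by the polynomial identity haf [[λA, B], [B, A]] = Σ_{t=0}^{⌊n/2⌋} h_t λ^t. Then for each t, h_t = Σ_S Σ_T haf A_{S,S} · haf A_{T,T} · per B_{N∖S, N∖T}, where the sums run over all subsets S, T of N = {1, ..., n} with |S| = |T| = 2t, A_{S,S} is the submatrix of A with rows and columns indexed by S, and B_{N∖S,N∖T} is the submatrix of B with rows indexed by N∖S and columns indexed by N∖T. -/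
open Matrix BigOperators

/-- The hafnian of an `n × n` real matrix: for `n = 2m` it is
`(1/(m! 2^m)) Σ_π C_{π(1),π(2)} ⋯ C_{π(2m-1),π(2m)}`, and it is `0` for odd `n`. -/
noncomputable def haf {n : ℕ} (C : Matrix (Fin n) (Fin n) ℝ) : ℝ :=
  if Even n then
    (1 / ((n / 2).factorial * 2 ^ (n / 2)) : ℝ) *
      ∑ π : Equiv.Perm (Fin n),
        ∏ i : Fin (n / 2), C (π ⟨2 * i.val, by omega⟩) (π ⟨2 * i.val + 1, by omega⟩)
  else 0

/-- The permanent of an `n × n` real matrix. -/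
noncomputable def per {n : ℕ} (M : Matrix (Fin n) (Fin n) ℝ) : ℝ :=
  ∑ π : Equiv.Perm (Fin n), ∏ i, M i (π i)

/-- The equivalence used to view a block `2n × 2n` matrix (indexed by `Fin n ⊕ Fin n`)
as a matrix indexed by `Fin (2 * n)`. -/
def blockIndex (n : ℕ) : (Fin n ⊕ Fin n) ≃ Fin (2 * n) :=
  finSumFinEquiv.trans (finCongr (by omega))

/-- The monotone enumeration of a subset `S` of `Fin n` of prescribed cardinality `k`,
as a map `Fin k → Fin n`. -/
def enum {n k : ℕ} (S : Finset (Fin n)) (h : S.card = k) : Fin k → Fin n :=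
  fun i => (S.orderIsoOfFin h i : Fin n)

open Finset MvPolynomial

/-!
Let `q = ½ ∑ C x y X_x X_y` and `b = ∑ B x y X_x Y_y`. For `#S = 2m`, the coefficient of the
squarefree monomial `∏ i ∈ S, X_i` in `q ^ m / m!` is the hafnian of the principal submatrix of `C`
on `S`; likewise, permanents of submatrices of `B` are squarefree coefficients of `b ^ r / r!`.
The quadratic form of the block matrix `[[l A, B], [Bᵀ, D]]` is `l q_A(X) + q_D(Y) + b(X, Y)`, and
the binomial theorem for divided powers splits its `n`-th divided power into products
`l ^ t (q_A(X) ^ t / t!) (q_D(Y) ^ s / s!) (b ^ r / r!)` with `t + s + r = n`. Taking the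
coefficient of the product of all the variables turns each of these into a sum over sets `S`, `T`
of the coefficients at `S`, `T` and their complements. Counting `X`-variables gives `2t + r = n`,
so only `s = t` contributes to `l ^ t`.
-/

theorem exists_perm_of_map_univ_val_eq {κ σ : Type*} [Fintype κ] (e : κ ↪ σ) {g : κ → σ}
    (h : univ.val.map g = (univ.map e).val) : ∃ π : Equiv.Perm κ, e ∘ π = g := by
  have hg : Function.Injective g := fun a b hab ↦
    Multiset.inj_on_of_nodup_map (h ▸ nodup _) a (mem_univ_val a) b (mem_univ_val b) hab
  have hrange : Set.range g = Set.range e := by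
    ext x
    simpa using congrArg (x ∈ ·) h
  refine ⟨(Equiv.ofInjective g hg).trans
    ((Equiv.setCongr hrange).trans (Equiv.ofInjective e e.injective).symm), ?_⟩
  ext k
  simp [Equiv.apply_ofInjective_symm]

theorem sum_eq_sum_subtype_of_forall_not {ι M : Type*} [Fintype ι] [AddCommMonoid M] (p : ι → Prop)
    [DecidablePred p] {f : ι → M} (hf : ∀ i, ¬p i → f i = 0) :
    ∑ i, f i = ∑ i : {i // p i}, f i := by
  symm
  refine Fintype.sum_of_injective Subtype.val Subtype.val_injective _ _ (fun i hi ↦ hf i ?_)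
    fun _ ↦ rfl
  simpa using hi

theorem eq_of_forall_sum_range_mul_pow_eq {R : Type*} [CommRing R] [IsDomain R] [Infinite R]
    {f g : ℕ → R} {m k : ℕ}
    (h : ∀ x, ∑ i ∈ range m, f i * x ^ i = ∑ i ∈ range k, g i * x ^ i) {t : ℕ} (hm : t < m)
    (hk : t < k) : f t = g t := by
  have hpoly : ∑ i ∈ range m, Polynomial.C (f i) * Polynomial.X ^ i =
      ∑ i ∈ range k, Polynomial.C (g i) * Polynomial.X ^ i :=
    Polynomial.funext fun x ↦ by simpa [Polynomial.eval_finsetSum] using h x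
  simpa [Polynomial.finsetSum_coeff, Polynomial.coeff_C_mul_X_pow, hm, hk] using
    congrArg (Polynomial.coeff · t) hpoly

section SquarefreeCoeff

variable {R σ α β : Type*} [CommSemiring R] [DecidableEq σ]

/-- The coefficient of the squarefree monomial `∏ i ∈ S, X i`, as a linear functional. -/
noncomputable def sqfreeCoeff (S : Finset σ) : MvPolynomial σ R →ₗ[R] R :=
  lcoeff R (Multiset.toFinsupp S.val)

theorem sqfreeCoeff_prod_X {κ : Type*} [Fintype κ] (S : Finset σ) (g : κ → σ) :
    sqfreeCoeff S (∏ k, X (g k) : MvPolynomial σ R) =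
      if univ.val.map g = S.val then 1 else 0 := by
  have hg : ∑ k, Finsupp.single (g k) 1 = Multiset.toFinsupp (univ.val.map g) := by
    simp only [← Multiset.toFinsupp_singleton, ← map_sum]
    rw [← Multiset.sum_map_singleton (univ.val.map g), Multiset.map_map]
    rfl
  simp only [sqfreeCoeff, lcoeff_apply, X, ← monomial_sum_one, hg, coeff_monomial,
    Multiset.toFinsupp.injective.eq_iff]

theorem sum_mul_sqfreeCoeff_prod_X {κ : Type*} [Fintype κ] [DecidableEq κ] [Fintype σ]
    (e : κ ↪ σ) (F : (κ → σ) → R) :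
    ∑ g : κ → σ, F g * sqfreeCoeff (univ.map e) (∏ k, X (g k) : MvPolynomial σ R) =
      ∑ π : Equiv.Perm κ, F (e ∘ π) := by
  symm
  refine Fintype.sum_of_injective (fun π : Equiv.Perm κ ↦ e ∘ π)
    (fun π τ h ↦ DFunLike.coe_injective (e.injective.comp_left h)) _ _ ?_ ?_
  · intro g hg
    rw [sqfreeCoeff_prod_X, if_neg fun h ↦ hg (exists_perm_of_map_univ_val_eq e h), mul_zero]
  · intro π
    have h : univ.val.map (e ∘ π) = (univ.map e).val := by
      rw [← Multiset.map_map, Multiset.map_univ_val_equiv, map_val]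
    rw [sqfreeCoeff_prod_X, if_pos h, mul_one]

theorem sqfreeCoeff_mul (U : Finset σ) (p q : MvPolynomial σ R) :
    sqfreeCoeff U (p * q) = ∑ S ∈ U.powerset, sqfreeCoeff S p * sqfreeCoeff (U \ S) q := by
  simp only [sqfreeCoeff, lcoeff_apply, coeff_mul]
  symm
  refine sum_bij (fun S _ ↦ (Multiset.toFinsupp S.val, Multiset.toFinsupp (U \ S).val))
    ?_ ?_ ?_ fun _ _ ↦ rfl
  · intro S hS
    rw [HasAntidiagonal.mem_antidiagonal, ← map_add, sdiff_val,
      add_tsub_cancel_of_le (val_le_iff.2 (mem_powerset.1 hS))]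
  · intro S _ T _ h
    exact val_injective (Multiset.toFinsupp.injective (Prod.ext_iff.1 h).1)
  · rintro ⟨a, b⟩ hab
    obtain ⟨s, rfl⟩ := Multiset.toFinsupp.surjective a
    obtain ⟨t, rfl⟩ := Multiset.toFinsupp.surjective b
    rw [HasAntidiagonal.mem_antidiagonal, ← map_add, Multiset.toFinsupp.injective.eq_iff] at hab
    have hs : s ≤ U.val := hab ▸ Multiset.le_add_right s t
    refine ⟨⟨s, Multiset.nodup_of_le hs U.nodup⟩, mem_powerset.2 (val_le_iff.1 hs), ?_⟩
    simp only [sdiff_val, ← hab, add_tsub_cancel_left]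

theorem coeff_sumElim_rename_mul_rename (s : α →₀ ℕ) (t : β →₀ ℕ)
    (p : MvPolynomial α R) (q : MvPolynomial β R) :
    coeff (s.sumElim t) (rename Sum.inl p * rename Sum.inr q) = coeff s p * coeff t q := by
  classical
  induction p using MvPolynomial.induction_on' with
  | add p₁ p₂ h₁ h₂ => simp only [map_add, add_mul, coeff_add, h₁, h₂]
  | monomial u a =>
    induction q using MvPolynomial.induction_on' with
    | add q₁ q₂ h₁ h₂ => simp only [map_add, mul_add, coeff_add, h₁, h₂]
    | monomial v b =>
      have h : u.sumElim v = s.sumElim t ↔ u = s ∧ v = t := by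
        simp [DFunLike.ext_iff]
      simp only [rename_monomial, monomial_mul, ← Finsupp.sumElim_eq_add, coeff_monomial, h,
        ite_zero_mul_ite_zero]

theorem sqfreeCoeff_disjSum_rename_mul_rename [DecidableEq α] [DecidableEq β] (S : Finset α)
    (T : Finset β) (p : MvPolynomial α R) (q : MvPolynomial β R) :
    sqfreeCoeff (S.disjSum T) (rename Sum.inl p * rename Sum.inr q) =
      sqfreeCoeff S p * sqfreeCoeff T q := by
  have h : Multiset.toFinsupp (S.disjSum T).val =
      (Multiset.toFinsupp S.val).sumElim (Multiset.toFinsupp T.val) := by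
    ext (x | x) <;> simp [Multiset.count_eq_of_nodup, nodup, -val_disjSum]
  rw [sqfreeCoeff, lcoeff_apply, h, coeff_sumElim_rename_mul_rename]
  rfl

theorem sqfreeCoeff_univ_rename_mul_rename_mul [Fintype α] [Fintype β] [DecidableEq α]
    [DecidableEq β] (p : MvPolynomial α R) (q : MvPolynomial β R)
    (f : MvPolynomial (α ⊕ β) R) :
    sqfreeCoeff univ (rename Sum.inl p * rename Sum.inr q * f) =
      ∑ S : Finset α, ∑ T : Finset β,
        sqfreeCoeff S p * sqfreeCoeff T q * sqfreeCoeff (Sᶜ.disjSum Tᶜ) f := by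
  rw [sqfreeCoeff_mul, powerset_univ, ← Fintype.sum_prod_type']
  refine Fintype.sum_equiv sumEquiv.toEquiv _ _ fun W ↦ ?_
  obtain ⟨⟨S, T⟩, rfl⟩ := sumEquiv.symm.surjective W
  have h : univ \ S.disjSum T = Sᶜ.disjSum Tᶜ := by
    ext (x | x) <;> simp
  simp [h, sqfreeCoeff_disjSum_rename_mul_rename]

theorem sqfreeCoeff_eq_zero_of_isWeightedHomogeneous {M : Type*} [AddCommMonoid M] {w : σ → M}
    {p : MvPolynomial σ R} {m : M} (hp : p.IsWeightedHomogeneous w m) {S : Finset σ}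
    (hS : ∑ i ∈ S, w i ≠ m) : sqfreeCoeff S p = 0 := by
  have hweight : Finsupp.weight w (Multiset.toFinsupp S.val) = ∑ i ∈ S, w i := by
    simp [← sum_multiset_singleton, Finsupp.weight_single]
  exact hp.coeff_eq_zero _ (hweight ▸ hS)

end SquarefreeCoeff

section DividedPow

variable (K : Type*) {A : Type*} [Field K] [CommSemiring A] [Algebra K A]

/-- The divided power `a ^ m / m!`, the degree `m` term of `exp a`, in a commutative algebra. -/
noncomputable def dividedPow (m : ℕ) (a : A) : A :=
  (m.factorial : K)⁻¹ • a ^ m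

theorem dividedPow_add [CharZero K] (n : ℕ) (a b : A) :
    dividedPow K n (a + b) =
      ∑ ij ∈ antidiagonal n, dividedPow K ij.1 a * dividedPow K ij.2 b := by
  rw [dividedPow, (Commute.all a b).add_pow', smul_sum]
  refine sum_congr rfl fun ⟨i, j⟩ hij ↦ ?_
  obtain rfl := HasAntidiagonal.mem_antidiagonal.1 hij
  have hchoose : ((i + j).factorial : K)⁻¹ * (i + j).choose i =
      (i.factorial : K)⁻¹ * (j.factorial : K)⁻¹ := by
    rw [Nat.cast_add_choose, ← mul_div_assoc,
      inv_mul_cancel₀ (Nat.cast_ne_zero.2 (Nat.factorial_ne_zero _)), one_div, mul_inv]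
  rw [dividedPow, dividedPow, smul_mul_smul_comm, ← hchoose, ← Nat.cast_smul_eq_nsmul K,
    smul_smul]

theorem dividedPow_smul (m : ℕ) (c : K) (a : A) :
    dividedPow K m (c • a) = c ^ m • dividedPow K m a := by
  rw [dividedPow, dividedPow, smul_pow, smul_comm]

theorem map_dividedPow {B : Type*} [CommSemiring B] [Algebra K B] (φ : A →ₐ[K] B) (m : ℕ)
    (a : A) : φ (dividedPow K m a) = dividedPow K m (φ a) := by
  simp only [dividedPow, map_smul, map_pow]

theorem isWeightedHomogeneous_dividedPow {σ M : Type*} [AddCommMonoid M] {w : σ → M}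
    {p : MvPolynomial σ K} {d : M} (hp : p.IsWeightedHomogeneous w d) (m : ℕ) :
    (dividedPow K m p).IsWeightedHomogeneous w (m • d) :=
  (weightedHomogeneousSubmodule K w _).smul_mem _ (hp.pow m)

end DividedPow

section BilinearForm

variable {R A α β : Type*} [CommSemiring R] [CommSemiring A] [Algebra R A] [Fintype α] [Fintype β]

/-- The value `∑ x, ∑ y, M x y • (u x * v y)` of the bilinear form with matrix `M` at vectors with
entries in a commutative algebra. -/
def bilinearForm (M : Matrix α β R) (u : α → A) (v : β → A) : A :=
  ∑ x, ∑ y, M x y • (u x * v y)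

theorem bilinearForm_pow (M : Matrix α β R) (u : α → A) (v : β → A) (m : ℕ) :
    bilinearForm M u v ^ m =
      ∑ f : Fin m → α, ∑ g : Fin m → β,
        (∏ i, M (f i) (g i)) • ((∏ i, u (f i)) * ∏ i, v (g i)) := by
  rw [bilinearForm, ← Fintype.sum_prod_type', Fintype.sum_pow, ← Fintype.sum_prod_type']
  refine Fintype.sum_equiv (Equiv.arrowProdEquivProdArrow _ _ _) _ _ fun h ↦ ?_
  simp [prod_smul, prod_mul_distrib, Equiv.arrowProdEquivProdArrow]

theorem map_bilinearForm {B : Type*} [CommSemiring B] [Algebra R B] (φ : A →ₐ[R] B)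
    (M : Matrix α β R) (u : α → A) (v : β → A) :
    φ (bilinearForm M u v) = bilinearForm M (φ ∘ u) (φ ∘ v) := by
  simp [bilinearForm]

theorem bilinearForm_smul (c : R) (M : Matrix α β R) (u : α → A) (v : β → A) :
    bilinearForm (c • M) u v = c • bilinearForm M u v := by
  simp [bilinearForm, smul_sum, mul_smul]

theorem bilinearForm_transpose (M : Matrix α β R) (u : α → A) (v : β → A) :
    bilinearForm Mᵀ v u = bilinearForm M u v := by
  simp only [bilinearForm, transpose_apply, mul_comm (v _)]
  exact sum_comm

theorem isWeightedHomogeneous_bilinearForm {σ N : Type*} [AddCommMonoid N] {w : σ → N}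
    {u : α → MvPolynomial σ R} {v : β → MvPolynomial σ R} {a b : N}
    (hu : ∀ x, (u x).IsWeightedHomogeneous w a) (hv : ∀ y, (v y).IsWeightedHomogeneous w b)
    (M : Matrix α β R) : (bilinearForm M u v).IsWeightedHomogeneous w (a + b) :=
  .sum _ _ _ fun x _ ↦ .sum _ _ _ fun y _ ↦
    (weightedHomogeneousSubmodule R w _).smul_mem _ ((hu x).mul (hv y))

end BilinearForm

section GeneratingPolynomials

variable {K α β : Type*} [Field K] [Fintype α] [Fintype β]

/-- The quadratic form `½ ∑ x, ∑ y, C x y X_x X_y`, whose divided powers generate the hafnians of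
the principal submatrices of `C`. In characteristic two it is `0`. -/
noncomputable def quadPoly (C : Matrix α α K) : MvPolynomial α K :=
  (2⁻¹ : K) • bilinearForm C X X

/-- The bilinear form `∑ x, ∑ y, B x y X_x Y_y` in two sets of variables, indexed by the summands
of `α ⊕ β`, whose divided powers generate the permanents of the square submatrices of `B`. -/
noncomputable def bipartitePoly (B : Matrix α β K) : MvPolynomial (α ⊕ β) K :=
  bilinearForm B (X ∘ Sum.inl) (X ∘ Sum.inr)

theorem quadPoly_smul (c : K) (C : Matrix α α K) : quadPoly (c • C) = c • quadPoly C := by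
  rw [quadPoly, bilinearForm_smul, smul_comm, quadPoly]

theorem isHomogeneous_quadPoly (C : Matrix α α K) : (quadPoly C).IsHomogeneous 2 :=
  (homogeneousSubmodule α K 2).smul_mem _
    (isWeightedHomogeneous_bilinearForm (isHomogeneous_X K) (isHomogeneous_X K) C)

theorem isWeightedHomogeneous_bipartitePoly (B : Matrix α β K) :
    (bipartitePoly B).IsWeightedHomogeneous (Sum.elim 1 0 : α ⊕ β → ℕ) 1 :=
  isWeightedHomogeneous_bilinearForm (a := 1) (b := 0)
    (fun x ↦ isWeightedHomogeneous_X K (Sum.elim 1 0) (Sum.inl x))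
    (fun y ↦ isWeightedHomogeneous_X K (Sum.elim 1 0) (Sum.inr y)) B

theorem rename_quadPoly {σ : Type*} (j : α → σ) (C : Matrix α α K) :
    rename j (quadPoly C) = (2⁻¹ : K) • bilinearForm C (X ∘ j) (X ∘ j) := by
  rw [quadPoly, map_smul, map_bilinearForm]
  congr <;> funext <;> simp

theorem quadPoly_fromBlocks [CharZero K] (A : Matrix α α K) (B : Matrix α β K) (D : Matrix β β K) :
    quadPoly (fromBlocks A B Bᵀ D) =
      rename Sum.inl (quadPoly A) + (rename Sum.inr (quadPoly D) + bipartitePoly B) := by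
  have hblocks : bilinearForm (fromBlocks A B Bᵀ D) X X =
      bilinearForm A (X ∘ Sum.inl) (X ∘ Sum.inl) +
        (bilinearForm D (X ∘ Sum.inr) (X ∘ Sum.inr) +
          (bipartitePoly B + bipartitePoly B) : MvPolynomial (α ⊕ β) K) := by
    have hlower : bipartitePoly B = bilinearForm Bᵀ (X ∘ Sum.inr) (X ∘ Sum.inl) :=
      (bilinearForm_transpose _ _ _).symm
    nth_rw 2 [hlower]
    simp only [bipartitePoly, bilinearForm, Fintype.sum_sum_type, fromBlocks_apply₁₁,
      fromBlocks_apply₁₂, fromBlocks_apply₂₁, fromBlocks_apply₂₂, sum_add_distrib,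
      Function.comp_apply]
    ring
  rw [quadPoly, hblocks, rename_quadPoly, rename_quadPoly, smul_add, smul_add, ← two_smul K,
    inv_smul_smul₀ two_ne_zero]

end GeneratingPolynomials

section HafnianPermanent

variable {α β : Type*} [Fintype α] [Fintype β] [DecidableEq α] [DecidableEq β]

/-- The equivalence sending the two copies of `Fin m` to the even and odd elements of
`Fin (2 * m)`, so that `inl i` and `inr i` are sent to the two ends of the `i`-th pair in `haf`. -/
def evenOddEquiv (m : ℕ) : Fin m ⊕ Fin m ≃ Fin (2 * m) where
  toFun := Sum.elim (fun i ↦ ⟨2 * i, by omega⟩) (fun i ↦ ⟨2 * i + 1, by omega⟩)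
  invFun k := if k.val % 2 = 0 then .inl ⟨k / 2, by omega⟩ else .inr ⟨k / 2, by omega⟩
  left_inv := by
    rintro (i | i)
    · simp
    · simp only [Sum.elim_inr, Nat.add_mod, Nat.mul_mod_right, Nat.mod_succ, zero_add,
        one_ne_zero, ↓reduceIte, Sum.inr.injEq, Fin.ext_iff]
      omega
  right_inv k := by
    dsimp only
    split_ifs <;> ext <;> simp only [Sum.elim_inl, Sum.elim_inr] <;> omega

theorem factorial_mul_two_pow_mul_haf {m : ℕ} (C : Matrix (Fin (2 * m)) (Fin (2 * m)) ℝ) :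
    (m.factorial * 2 ^ m : ℝ) * haf C =
      ∑ π : Equiv.Perm (Fin (2 * m)),
        ∏ i, C (π (evenOddEquiv m (.inl i))) (π (evenOddEquiv m (.inr i))) := by
  have hm : 2 * m / 2 = m := by omega
  have hcancel : (m.factorial * 2 ^ m : ℝ) *
      (1 / ((2 * m / 2).factorial * 2 ^ (2 * m / 2))) = 1 := by
    rw [hm, mul_one_div_cancel (by positivity)]
  rw [haf, if_pos (even_two_mul m), ← mul_assoc, hcancel, one_mul]
  exact sum_congr rfl fun π _ ↦ Fintype.prod_equiv (finCongr hm) _ _ fun _ ↦ rfl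

theorem sqfreeCoeff_bilinearForm_X_pow {R : Type*} [CommSemiring R] (C : Matrix α α R) {m : ℕ}
    (e : Fin m ⊕ Fin m ↪ α) :
    sqfreeCoeff (univ.map e) (bilinearForm C X X ^ m : MvPolynomial α R) =
      ∑ π : Equiv.Perm (Fin m ⊕ Fin m), ∏ i, C (e (π (.inl i))) (e (π (.inr i))) := by
  refine .trans ?_ (sum_mul_sqfreeCoeff_prod_X e fun g ↦ ∏ i, C (g (.inl i)) (g (.inr i)))
  rw [bilinearForm_pow, ← Fintype.sum_prod_type', map_sum]
  refine Fintype.sum_equiv (Equiv.sumArrowEquivProdArrow _ _ _).symm _ _ fun ⟨f, g⟩ ↦ ?_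
  simp [Equiv.sumArrowEquivProdArrow]

theorem sqfreeCoeff_dividedPow_quadPoly (C : Matrix α α ℝ) {m : ℕ} (e : Fin (2 * m) ↪ α) :
    sqfreeCoeff (univ.map e) (dividedPow ℝ m (quadPoly C)) = haf (C.submatrix e e) := by
  have hpow : sqfreeCoeff (univ.map e) (bilinearForm C X X ^ m : MvPolynomial α ℝ) =
      (m.factorial * 2 ^ m : ℝ) * haf (C.submatrix e e) := by
    have hmap : univ.map e = univ.map ((evenOddEquiv m).toEmbedding.trans e) := by
      rw [← Finset.map_map, map_univ_equiv]
    rw [hmap, sqfreeCoeff_bilinearForm_X_pow, factorial_mul_two_pow_mul_haf]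
    exact Fintype.sum_equiv (evenOddEquiv m).permCongr _ _ fun π ↦ by simp [Equiv.permCongr_apply]
  rw [dividedPow, quadPoly, smul_pow, map_smul, map_smul, hpow, smul_eq_mul, smul_eq_mul, inv_pow]
  field_simp

theorem sqfreeCoeff_dividedPow_quadPoly_eq_zero {K : Type*} [Field K] (C : Matrix α α K) {m : ℕ}
    {S : Finset α} (hS : S.card ≠ 2 * m) : sqfreeCoeff S (dividedPow K m (quadPoly C)) = 0 :=
  sqfreeCoeff_eq_zero_of_isWeightedHomogeneous
    (isWeightedHomogeneous_dividedPow K (isHomogeneous_quadPoly C) m)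
    (by simpa [mul_comm] using hS)

theorem sum_perm_prod_perm_apply {r : ℕ} (M : Matrix (Fin r) (Fin r) ℝ) (σ : Equiv.Perm (Fin r)) :
    ∑ π : Equiv.Perm (Fin r), ∏ i, M (σ i) (π i) = per M :=
  Fintype.sum_equiv (Equiv.mulRight σ⁻¹) _ _ fun π ↦
    Fintype.prod_equiv σ _ _ fun i ↦ by simp

theorem sqfreeCoeff_bipartitePoly_pow (B : Matrix α β ℝ) {r : ℕ} (d : Fin r ↪ α)
    (e : Fin r ↪ β) :
    sqfreeCoeff ((univ.map d).disjSum (univ.map e)) (bipartitePoly B ^ r) =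
      r.factorial * per (B.submatrix d e) := by
  have hmonomial (f : Fin r → α) (g : Fin r → β) :
      sqfreeCoeff ((univ.map d).disjSum (univ.map e))
          ((∏ i, (X ∘ Sum.inl) (f i)) * ∏ i, (X ∘ Sum.inr) (g i) : MvPolynomial (α ⊕ β) ℝ) =
        sqfreeCoeff (univ.map d) (∏ i, X (f i) : MvPolynomial α ℝ) *
          sqfreeCoeff (univ.map e) (∏ i, X (g i) : MvPolynomial β ℝ) := by
    rw [← sqfreeCoeff_disjSum_rename_mul_rename]
    simp
  calc
    _ = ∑ f : Fin r → α, (∑ g : Fin r → β, (∏ i, B (f i) (g i)) *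
          sqfreeCoeff (univ.map e) (∏ i, X (g i) : MvPolynomial β ℝ)) *
            sqfreeCoeff (univ.map d) (∏ i, X (f i) : MvPolynomial α ℝ) := by
      simp only [bipartitePoly, bilinearForm_pow, map_sum, map_smul, hmonomial, smul_eq_mul,
        sum_mul]
      exact sum_congr rfl fun f _ ↦ sum_congr rfl fun g _ ↦ by ring
    _ = ∑ σ : Equiv.Perm (Fin r), ∑ π : Equiv.Perm (Fin r), ∏ i, B (d (σ i)) (e (π i)) := by
      have hinner (f : Fin r → α) := sum_mul_sqfreeCoeff_prod_X e fun g ↦ ∏ i, B (f i) (g i)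
      simp only [hinner]
      exact sum_mul_sqfreeCoeff_prod_X d fun f ↦ ∑ π : Equiv.Perm (Fin r), ∏ i, B (f i) (e (π i))
    _ = ∑ _σ : Equiv.Perm (Fin r), per (B.submatrix d e) :=
      sum_congr rfl fun σ _ ↦ sum_perm_prod_perm_apply (B.submatrix d e) σ
    _ = r.factorial * per (B.submatrix d e) := by
      simp [Fintype.card_perm]

theorem sqfreeCoeff_dividedPow_bipartitePoly (B : Matrix α β ℝ) {r : ℕ} (d : Fin r ↪ α)
    (e : Fin r ↪ β) :
    sqfreeCoeff ((univ.map d).disjSum (univ.map e)) (dividedPow ℝ r (bipartitePoly B)) =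
      per (B.submatrix d e) := by
  rw [dividedPow, map_smul, sqfreeCoeff_bipartitePoly_pow, smul_eq_mul,
    inv_mul_cancel_left₀ (Nat.cast_ne_zero.2 r.factorial_ne_zero)]

theorem sqfreeCoeff_dividedPow_bipartitePoly_eq_zero {K : Type*} [Field K] (B : Matrix α β K)
    {r : ℕ} {S : Finset α} {T : Finset β} (hS : S.card ≠ r) :
    sqfreeCoeff (S.disjSum T) (dividedPow K r (bipartitePoly B)) = 0 :=
  sqfreeCoeff_eq_zero_of_isWeightedHomogeneous
    (isWeightedHomogeneous_dividedPow K (isWeightedHomogeneous_bipartitePoly B) r)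
    (by simpa [sum_disjSum] using hS)

end HafnianPermanent

section BlockMatrix

variable {K α β : Type*} [Field K] [Fintype α] [Fintype β] [DecidableEq α] [DecidableEq β]

/-- The coefficient of `∏ x, X_x * ∏ y, Y_y` in the product of the three divided powers of the
summands of `quadPoly (fromBlocks A B Bᵀ D)`: the part of the block hafnian coming from perfect
matchings with `t`, `s` and `r` pairs in the blocks `A`, `D` and `B`. -/
noncomputable def matchingCoeff (A : Matrix α α K) (B : Matrix α β K) (D : Matrix β β K)
    (t s r : ℕ) : K :=
  sqfreeCoeff univ (rename Sum.inl (dividedPow K t (quadPoly A)) *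
    rename Sum.inr (dividedPow K s (quadPoly D)) * dividedPow K r (bipartitePoly B))

theorem matchingCoeff_eq_zero (A : Matrix α α K) (B : Matrix α β K) (D : Matrix β β K)
    {t r : ℕ} (s : ℕ) (h : 2 * t + r ≠ Fintype.card α) : matchingCoeff A B D t s r = 0 := by
  rw [matchingCoeff, sqfreeCoeff_univ_rename_mul_rename_mul]
  refine sum_eq_zero fun S _ ↦ sum_eq_zero fun T _ ↦ ?_
  by_cases hS : S.card = 2 * t
  · have hScompl : Sᶜ.card ≠ r := by
      have := card_add_card_compl S
      omega
    rw [sqfreeCoeff_dividedPow_bipartitePoly_eq_zero B hScompl, mul_zero]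
  · rw [sqfreeCoeff_dividedPow_quadPoly_eq_zero A hS, zero_mul, zero_mul]

theorem sum_antidiagonal_matchingCoeff (A : Matrix α α K) (B : Matrix α β K)
    (D : Matrix β β K) {t : ℕ} (ht : 2 * t ≤ Fintype.card α) :
    ∑ sr ∈ antidiagonal (Fintype.card α - t), matchingCoeff A B D t sr.1 sr.2 =
      matchingCoeff A B D t t (Fintype.card α - 2 * t) := by
  refine sum_eq_single (t, Fintype.card α - 2 * t) (fun sr hsr hne ↦ ?_) fun hnot ↦ ?_
  · refine matchingCoeff_eq_zero A B D _ fun h ↦ hne ?_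
    rw [HasAntidiagonal.mem_antidiagonal] at hsr
    ext <;> dsimp only <;> omega
  · refine absurd (HasAntidiagonal.mem_antidiagonal.2 ?_) hnot
    dsimp only
    omega

theorem sqfreeCoeff_univ_dividedPow_quadPoly_fromBlocks [CharZero K] (A : Matrix α α K)
    (B : Matrix α β K) (D : Matrix β β K) (l : K) (m : ℕ) :
    sqfreeCoeff univ (dividedPow K m (quadPoly (fromBlocks (l • A) B Bᵀ D))) =
      ∑ ij ∈ antidiagonal m, (∑ sr ∈ antidiagonal ij.2, matchingCoeff A B D ij.1 sr.1 sr.2) *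
        l ^ ij.1 := by
  rw [quadPoly_fromBlocks, quadPoly_smul, map_smul, dividedPow_add, map_sum]
  refine sum_congr rfl fun ij _ ↦ ?_
  rw [dividedPow_smul, dividedPow_add, mul_sum, map_sum, sum_mul]
  refine sum_congr rfl fun sr _ ↦ ?_
  rw [matchingCoeff, map_dividedPow, map_dividedPow, smul_mul_assoc, map_smul, smul_eq_mul,
    mul_comm, mul_assoc]

end BlockMatrix

theorem sqfreeCoeff_dividedPow_quadPoly_eq_haf_enum {n m : ℕ} (C : Matrix (Fin n) (Fin n) ℝ)
    {S : Finset (Fin n)} (hS : S.card = 2 * m) :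
    sqfreeCoeff S (dividedPow ℝ m (quadPoly C)) =
      haf (C.submatrix (enum S hS) (enum S hS)) := by
  have h := sqfreeCoeff_dividedPow_quadPoly C (S.orderEmbOfFin hS).toEmbedding
  rwa [map_orderEmbOfFin_univ] at h

theorem sqfreeCoeff_dividedPow_bipartitePoly_eq_per_enum {a b r : ℕ}
    (B : Matrix (Fin a) (Fin b) ℝ) {S : Finset (Fin a)} {T : Finset (Fin b)} (hS : S.card = r)
    (hT : T.card = r) :
    sqfreeCoeff (S.disjSum T) (dividedPow ℝ r (bipartitePoly B)) =
      per (B.submatrix (enum S hS) (enum T hT)) := by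
  have h := sqfreeCoeff_dividedPow_bipartitePoly B (S.orderEmbOfFin hS).toEmbedding
    (T.orderEmbOfFin hT).toEmbedding
  rwa [map_orderEmbOfFin_univ, map_orderEmbOfFin_univ] at h

theorem haf_submatrix_equiv_symm {α : Type*} [Fintype α] [DecidableEq α] {m : ℕ} (C : Matrix α α ℝ)
    (e : α ≃ Fin (2 * m)) :
    haf (C.submatrix e.symm e.symm) = sqfreeCoeff univ (dividedPow ℝ m (quadPoly C)) := by
  have h := sqfreeCoeff_dividedPow_quadPoly C e.symm.toEmbedding
  rw [map_univ_equiv] at h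
  exact h.symm

theorem matchingCoeff_eq_sum_haf_mul_haf_mul_per {n t : ℕ} (A B D : Matrix (Fin n) (Fin n) ℝ) :
    matchingCoeff A B D t t (n - 2 * t) =
      ∑ S : {S : Finset (Fin n) // S.card = 2 * t}, ∑ T : {T : Finset (Fin n) // T.card = 2 * t},
        haf (A.submatrix (enum S.1 S.2) (enum S.1 S.2)) *
          haf (D.submatrix (enum T.1 T.2) (enum T.1 T.2)) *
          per (B.submatrix
            (enum (S.1ᶜ) (by simp [Finset.card_compl, S.2] : (S.1ᶜ).card = n - 2 * t))
            (enum (T.1ᶜ) (by simp [Finset.card_compl, T.2] : (T.1ᶜ).card = n - 2 * t))) := by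
  rw [matchingCoeff, sqfreeCoeff_univ_rename_mul_rename_mul,
    sum_eq_sum_subtype_of_forall_not (fun S : Finset (Fin n) ↦ S.card = 2 * t) fun S hS ↦ by
      simp only [sqfreeCoeff_dividedPow_quadPoly_eq_zero A hS, zero_mul, sum_const_zero]]
  refine sum_congr rfl fun S _ ↦ ?_
  rw [sum_eq_sum_subtype_of_forall_not (fun T : Finset (Fin n) ↦ T.card = 2 * t) fun T hT ↦ by
      simp only [sqfreeCoeff_dividedPow_quadPoly_eq_zero D hT, zero_mul, mul_zero]]
  refine sum_congr rfl fun T _ ↦ ?_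
  rw [sqfreeCoeff_dividedPow_quadPoly_eq_haf_enum, sqfreeCoeff_dividedPow_quadPoly_eq_haf_enum,
    sqfreeCoeff_dividedPow_bipartitePoly_eq_per_enum]

theorem hafnian_block_coeff_formula_general (n : ℕ) (A B D : Matrix (Fin n) (Fin n) ℝ)
    (h : ℕ → ℝ)
    (hh : ∀ l : ℝ,
      haf ((Matrix.fromBlocks (l • A) B Bᵀ D).submatrix
          (blockIndex n).symm (blockIndex n).symm)
        = ∑ t ∈ Finset.range (n / 2 + 1), h t * l ^ t) :
    ∀ t ≤ n / 2,
      h t = ∑ S : {S : Finset (Fin n) // S.card = 2 * t},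
              ∑ T : {T : Finset (Fin n) // T.card = 2 * t},
        haf (A.submatrix (enum S.1 S.2) (enum S.1 S.2)) *
          haf (D.submatrix (enum T.1 T.2) (enum T.1 T.2)) *
          per (B.submatrix
            (enum (S.1ᶜ) (by simp [Finset.card_compl, S.2] : (S.1ᶜ).card = n - 2 * t))
            (enum (T.1ᶜ) (by simp [Finset.card_compl, T.2] : (T.1ᶜ).card = n - 2 * t))) := by
  intro t ht
  have hexpand (l : ℝ) : ∑ i ∈ range (n / 2 + 1), h i * l ^ i =
      ∑ i ∈ range (n + 1),
        (∑ sr ∈ antidiagonal (n - i), matchingCoeff A B D i sr.1 sr.2) * l ^ i := by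
    rw [← hh, haf_submatrix_equiv_symm, sqfreeCoeff_univ_dividedPow_quadPoly_fromBlocks]
    exact Finset.Nat.sum_antidiagonal_eq_sum_range_succ_mk _ n
  calc
    h t = ∑ sr ∈ antidiagonal (n - t), matchingCoeff A B D t sr.1 sr.2 :=
      eq_of_forall_sum_range_mul_pow_eq hexpand (by omega) (by omega)
    _ = matchingCoeff A B D t t (n - 2 * t) := by
      simpa using sum_antidiagonal_matchingCoeff A B D (t := t)
        (by rw [Fintype.card_fin]; omega)
    _ = _ := matchingCoeff_eq_sum_haf_mul_haf_mul_per A B D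

theorem hafnian_block_coeff_formula (n : ℕ) (A B : Matrix (Fin n) (Fin n) ℝ)
    (hA : Aᵀ = A) (hBsymm : Bᵀ = B)
    (hBpsd : ∀ x : Fin n → ℝ, 0 ≤ x ⬝ᵥ B *ᵥ x)
    (h : ℕ → ℝ)
    (hh : ∀ l : ℝ,
      haf ((Matrix.fromBlocks (l • A) B B A).submatrix
          (blockIndex n).symm (blockIndex n).symm)
        = ∑ t ∈ Finset.range (n / 2 + 1), h t * l ^ t) :
    ∀ t ≤ n / 2,
      h t = ∑ S : {S : Finset (Fin n) // S.card = 2 * t},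
              ∑ T : {T : Finset (Fin n) // T.card = 2 * t},
        haf (A.submatrix (enum S.1 S.2) (enum S.1 S.2)) *
          haf (A.submatrix (enum T.1 T.2) (enum T.1 T.2)) *
          per (B.submatrix
            (enum (S.1ᶜ) (by simp [Finset.card_compl, S.2] : (S.1ᶜ).card = n - 2 * t))
            (enum (T.1ᶜ) (by simp [Finset.card_compl, T.2] : (T.1ᶜ).card = n - 2 * t))) := by
  exact hafnian_block_coeff_formula_general n A B A h (by rwa [hBsymm])
end

section
/- Let A and B be symmetric real n×n matrices with B positive semi-definite, and let λ ≥ 0 be a real number. Then haf [[λA, B], [B, A]] ≥ per B, where [[λA, B], [B, A]] denotes the 2n×2n block matrix with blocks λA, B, B, A. -/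
open Matrix BigOperators

/-!
Write `D` for the coefficient of the monomial containing every variable exactly once. With the
polynomials `q(x) = ∑ A i j x_i x_j` and `b(x, y) = ∑ B i j x_i y_j`, the hafnian of the block
matrix is `D ((2 b + l q(x) + q(y)) ^ n)` and the permanent of `B` is `D ((2 b) ^ n)`, both up to
the factor `n! 2 ^ n`. Since `2 B` is a Gram matrix, `2 b = ∑ r, v_r(x) v_r(y)` for linear forms
`v_r`, so expanding the power gives nonnegative multiples of `D (p q ^ i) * D (p q ^ j)`, where `p`
is a product of the `v_r`. For `i = j` this is a square, and for `i ≠ j` the two polynomials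
have different degrees, so that one of the coefficients vanishes. Discarding all terms except those
of `(2 b) ^ n` gives the inequality.
-/

section MultilinearCoeff

open MvPolynomial

variable {R σ τ κ : Type*} [CommSemiring R]

/-- The coefficient of the monomial `∏ i, X i`, in which every variable occurs exactly once. Both
permanents and hafnians are coefficients of this kind. -/
noncomputable def multilinearCoeff [Finite σ] : MvPolynomial σ R →ₗ[R] R :=
  lcoeff R (Finsupp.equivFunOnFinite.symm 1)

lemma multilinearCoeff_monomial [Finite σ] (s : σ →₀ ℕ) (a : R) [Decidable (∀ i, s i = 1)] :
    multilinearCoeff (monomial s a) = if ∀ i, s i = 1 then a else 0 := by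
  classical
  simp only [multilinearCoeff, lcoeff_apply, coeff_monomial, Finsupp.ext_iff,
    Finsupp.equivFunOnFinite_symm_apply_apply, Pi.one_apply]

open Classical in
lemma multilinearCoeff_prod_X [Finite σ] [Fintype κ] (g : κ → σ) :
    multilinearCoeff (∏ k, X (g k) : MvPolynomial σ R) = if g.Bijective then 1 else 0 := by
  have prod_X_eq : (∏ k, X (g k) : MvPolynomial σ R) =
      monomial (∑ k, Finsupp.single (g k) 1) 1 := (monomial_sum_one _ _).symm
  simp only [prod_X_eq, multilinearCoeff_monomial, Finsupp.finsetSum_apply, Finsupp.single_apply,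
    Finset.sum_boole, Nat.cast_id, Function.bijective_iff_existsUnique,
    Fintype.existsUnique_iff_card_one]

lemma sum_mul_multilinearCoeff_prod_X [Fintype σ] [DecidableEq σ] [Fintype κ] [DecidableEq κ]
    (F : (κ → σ) → R) :
    ∑ g : κ → σ, F g * multilinearCoeff (∏ k, X (g k) : MvPolynomial σ R) =
      ∑ e : κ ≃ σ, F e := by
  classical
  simp only [multilinearCoeff_prod_X]
  refine (Fintype.sum_of_injective (fun e : κ ≃ σ ↦ ⇑e) DFunLike.coe_injective _ _ ?_ ?_).symm
  · intro g hg
    rw [if_neg fun hbij ↦ hg ⟨Equiv.ofBijective g hbij, rfl⟩, mul_zero]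
  · intro e
    rw [if_pos e.bijective, mul_one]

lemma multilinearCoeff_rename_inl_mul_rename_inr [Finite σ] [Finite τ]
    (p : MvPolynomial σ R) (q : MvPolynomial τ R) :
    multilinearCoeff (rename Sum.inl p * rename Sum.inr q) =
      multilinearCoeff p * multilinearCoeff q := by
  classical
  induction p using MvPolynomial.induction_on' with
  | add p₁ p₂ h₁ h₂ => simp only [map_add, add_mul, h₁, h₂]
  | monomial s a =>
    induction q using MvPolynomial.induction_on' with
    | add q₁ q₂ h₁ h₂ => simp only [map_add, mul_add, h₁, h₂]
    | monomial t b =>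
      simp only [rename_monomial, monomial_mul, ← Finsupp.sumElim_eq_add,
        multilinearCoeff_monomial, Sum.forall, Finsupp.sumElim_inl, Finsupp.sumElim_inr,
        ite_zero_mul_ite_zero]

lemma eq_card_of_multilinearCoeff_ne_zero [Finite σ] {p : MvPolynomial σ R} {d : ℕ}
    (hp : p.IsHomogeneous d) (h : multilinearCoeff p ≠ 0) : d = Nat.card σ := by
  have := Fintype.ofFinite σ
  by_contra hd
  refine h (hp.coeff_eq_zero ?_)
  simpa [Finsupp.degree_eq_sum, Nat.card_eq_fintype_card] using Ne.symm hd

end MultilinearCoeff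

section Permanent

open MvPolynomial

variable {R σ τ κ : Type*} [CommSemiring R]

lemma multilinearCoeff_prod_toMvPolynomial [Fintype σ] [DecidableEq σ] (M : Matrix σ σ R) :
    multilinearCoeff (∏ i, M.toMvPolynomial i) = M.permanent := by
  simp only [Matrix.toMvPolynomial, ← C_mul_X_eq_monomial, ← smul_eq_C_mul,
    Fintype.prod_sum, Finset.prod_smul, map_sum, map_smul, smul_eq_mul]
  rw [sum_mul_multilinearCoeff_prod_X fun g ↦ ∏ i, M i (g i), ← M.permanent_transpose]
  rfl

/-- The bilinear form `∑ i j, M i j * x i * y j` of a matrix, as a polynomial in the two families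
of variables `x i = X (Sum.inl i)` and `y j = X (Sum.inr j)`. -/
noncomputable def bilinearPolynomial [Fintype σ] [Fintype τ] (M : Matrix σ τ R) :
    MvPolynomial (σ ⊕ τ) R :=
  ∑ i, ∑ j, M i j • (X (Sum.inl i) * X (Sum.inr j))

lemma bilinearPolynomial_transpose_mul [Fintype σ] [Fintype τ] [Fintype κ]
    (V : Matrix κ σ R) (W : Matrix κ τ R) :
    bilinearPolynomial (Vᵀ * W) =
      ∑ r, rename Sum.inl (V.toMvPolynomial r) * rename Sum.inr (W.toMvPolynomial r) := by
  simp only [bilinearPolynomial, Matrix.toMvPolynomial, ← C_mul_X_eq_monomial, map_sum, map_mul,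
    rename_C, rename_X, Finset.sum_mul_sum, Matrix.mul_apply, Matrix.transpose_apply,
    Finset.sum_smul, smul_eq_C_mul]
  rw [Finset.sum_comm_cycle]
  refine Finset.sum_congr rfl fun r _ ↦ Finset.sum_congr rfl fun i _ ↦
    Finset.sum_congr rfl fun j _ ↦ ?_
  ring

lemma multilinearCoeff_bilinearPolynomial_pow [Fintype σ] [DecidableEq σ] (M : Matrix σ σ R) :
    multilinearCoeff (bilinearPolynomial M ^ Fintype.card σ) =
      (Fintype.card σ).factorial * M.permanent := by
  have expand : bilinearPolynomial M =
      ∑ i, rename Sum.inl (X i) * rename Sum.inr (M.toMvPolynomial i) := by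
    simpa using bilinearPolynomial_transpose_mul (1 : Matrix σ σ R) M
  have reorder (e : Fin (Fintype.card σ) ≃ σ) :
      multilinearCoeff (∏ k, M.toMvPolynomial (e k)) = M.permanent := by
    rw [e.prod_comp, multilinearCoeff_prod_toMvPolynomial]
  simp only [expand, Fintype.sum_pow, Finset.prod_mul_distrib, ← map_prod, map_sum,
    multilinearCoeff_rename_inl_mul_rename_inr]
  simp only [mul_comm (multilinearCoeff (∏ _, X _))]
  rw [sum_mul_multilinearCoeff_prod_X fun f ↦ multilinearCoeff (∏ k, M.toMvPolynomial (f k))]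
  simp [reorder, Fintype.card_equiv (Fintype.equivFin σ).symm]

end Permanent

lemma per_eq_permanent {n : ℕ} (M : Matrix (Fin n) (Fin n) ℝ) : per M = M.permanent :=
  M.permanent_transpose

section Hafnian

open MvPolynomial

variable {R σ τ : Type*} [CommSemiring R] [Fintype σ]

/-- The quadratic form `∑ i j, M i j * x i * x j` of a matrix, as a polynomial. -/
noncomputable def quadraticPolynomial (M : Matrix σ σ R) : MvPolynomial σ R :=
  ∑ i, ∑ j, M i j • (X i * X j)

lemma isHomogeneous_quadraticPolynomial (M : Matrix σ σ R) :
    (quadraticPolynomial M).IsHomogeneous 2 :=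
  (homogeneousSubmodule σ R 2).sum_mem fun i _ ↦ (homogeneousSubmodule σ R 2).sum_mem fun j _ ↦
    (homogeneousSubmodule σ R 2).smul_mem _ ((isHomogeneous_X R i).mul (isHomogeneous_X R j))

lemma quadraticPolynomial_smul (c : R) (M : Matrix σ σ R) :
    quadraticPolynomial (c • M) = c • quadraticPolynomial M := by
  simp only [quadraticPolynomial, Matrix.smul_apply, smul_assoc, Finset.smul_sum]

lemma quadraticPolynomial_fromBlocks [Fintype τ] (A : Matrix σ σ R) (B : Matrix σ τ R)
    (C : Matrix τ σ R) (D : Matrix τ τ R) :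
    quadraticPolynomial (Matrix.fromBlocks A B C D) =
      bilinearPolynomial (B + Cᵀ) +
        (rename Sum.inl (quadraticPolynomial A) + rename Sum.inr (quadraticPolynomial D)) := by
  simp only [quadraticPolynomial, bilinearPolynomial, Fintype.sum_sum_type,
    Matrix.fromBlocks_apply₁₁, Matrix.fromBlocks_apply₁₂, Matrix.fromBlocks_apply₂₁,
    Matrix.fromBlocks_apply₂₂, map_sum, map_smul, map_mul, rename_X, Matrix.add_apply,
    Matrix.transpose_apply, add_smul, Finset.sum_add_distrib]
  have swap : ∑ i, ∑ j, C i j • (X (Sum.inr i) * X (Sum.inl j) : MvPolynomial (σ ⊕ τ) R) =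
      ∑ j, ∑ i, C i j • (X (Sum.inl j) * X (Sum.inr i)) := by
    rw [Finset.sum_comm]
    simp only [mul_comm]
  rw [swap]
  ring

lemma multilinearCoeff_quadraticPolynomial_pow [DecidableEq σ] (M : Matrix σ σ R) (n : ℕ) :
    multilinearCoeff (quadraticPolynomial M ^ n) =
      ∑ e : Fin n × Fin 2 ≃ σ, ∏ k, M (e (k, 0)) (e (k, 1)) := by
  have as_sum : quadraticPolynomial M =
      ∑ p : Fin 2 → σ, M (p 0) (p 1) • ∏ j, X (p j) := by
    rw [← (finTwoArrowEquiv σ).symm.sum_comp, Fintype.sum_prod_type]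
    simp [quadraticPolynomial, Fin.prod_univ_two]
  rw [as_sum, Fintype.sum_pow, ← (Equiv.curry (Fin n) (Fin 2) σ).sum_comp, map_sum,
    ← sum_mul_multilinearCoeff_prod_X fun g : Fin n × Fin 2 → σ ↦ ∏ k, M (g (k, 0)) (g (k, 1))]
  refine Finset.sum_congr rfl fun g _ ↦ ?_
  simp [Finset.prod_smul, Fintype.prod_prod_type, Function.curry]

/-- The `k`-th pair of consecutive indices `2 * k`, `2 * k + 1` multiplied together in `haf`,
as the images of `(k, 0)` and `(k, 1)`. -/
def consecutivePairs (n : ℕ) : Fin n × Fin 2 ≃ Fin (2 * n) :=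
  finProdFinEquiv.trans (finCongr (mul_comm n 2))

lemma factorial_mul_two_pow_mul_haf_s8 {n : ℕ} (M : Matrix (Fin (2 * n)) (Fin (2 * n)) ℝ) :
    n.factorial * 2 ^ n * haf M =
      ∑ π : Equiv.Perm (Fin (2 * n)), ∏ k,
        M (π (consecutivePairs n (k, 0))) (π (consecutivePairs n (k, 1))) := by
  have half : 2 * n / 2 = n := Nat.mul_div_cancel_left n two_pos
  have prod_eq (π : Equiv.Perm (Fin (2 * n))) :
      ∏ k : Fin (2 * n / 2), M (π ⟨2 * k, by omega⟩) (π ⟨2 * k + 1, by omega⟩) =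
        ∏ k, M (π (consecutivePairs n (k, 0))) (π (consecutivePairs n (k, 1))) := by
    refine Fintype.prod_equiv (finCongr half) _ _ fun k ↦ ?_
    congr 2 <;> ext <;> simp [consecutivePairs, add_comm]
  rw [haf, if_pos (even_two_mul n), Finset.sum_congr rfl fun π _ ↦ prod_eq π, half, ← mul_assoc,
    mul_one_div_cancel (by positivity), one_mul]

lemma factorial_mul_two_pow_mul_haf_submatrix_symm {n : ℕ} (e : σ ≃ Fin (2 * n))
    (M : Matrix σ σ ℝ) :
    n.factorial * 2 ^ n * haf (M.submatrix e.symm e.symm) =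
      multilinearCoeff (quadraticPolynomial M ^ n) := by
  classical
  rw [factorial_mul_two_pow_mul_haf_s8, multilinearCoeff_quadraticPolynomial_pow]
  refine Fintype.sum_equiv ((consecutivePairs n).symm.equivCongr e.symm) _ _ fun π ↦ ?_
  simp

end Hafnian

section Positivity

open MvPolynomial

variable {R σ κ : Type*} [CommRing R] [LinearOrder R] [IsStrictOrderedRing R] [Finite σ]
  [Fintype κ] {p q : MvPolynomial σ R} {d e : ℕ}

lemma multilinearCoeff_mul_pow_mul_nonneg (hp : p.IsHomogeneous d) (hq : q.IsHomogeneous e)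
    (he : e ≠ 0) (i j : ℕ) :
    0 ≤ multilinearCoeff (p * q ^ i) * multilinearCoeff (p * q ^ j) := by
  obtain rfl | hij := eq_or_ne i j
  · exact mul_self_nonneg _
  refine (mul_eq_zero.2 ?_).ge
  by_contra! h
  have hi := eq_card_of_multilinearCoeff_ne_zero (hp.mul (hq.pow i)) h.1
  have hj := eq_card_of_multilinearCoeff_ne_zero (hp.mul (hq.pow j)) h.2
  exact hij (Nat.eq_of_mul_eq_mul_left (Nat.pos_of_ne_zero he) (by omega))

lemma multilinearCoeff_rename_mul_rename_mul_pow_nonneg (hp : p.IsHomogeneous d)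
    (hq : q.IsHomogeneous e) (he : e ≠ 0) {l : R} (hl : 0 ≤ l) (k : ℕ) :
    0 ≤ multilinearCoeff (rename Sum.inl p * rename Sum.inr p *
      (l • rename Sum.inl q + rename Sum.inr q) ^ k) := by
  have term (i j : ℕ) : rename Sum.inl p * rename Sum.inr p *
      ((l • rename Sum.inl q) ^ i * rename Sum.inr q ^ j * (k.choose i : MvPolynomial (σ ⊕ σ) R)) =
      (k.choose i * l ^ i) • (rename Sum.inl (p * q ^ i) * rename Sum.inr (p * q ^ j)) := by
    simp only [smul_eq_C_mul, map_mul, map_pow, map_natCast]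
    ring
  simp only [add_pow, Finset.mul_sum, term, map_sum, map_smul,
    multilinearCoeff_rename_inl_mul_rename_inr]
  exact Finset.sum_nonneg fun i _ ↦
    smul_nonneg (by positivity) (multilinearCoeff_mul_pow_mul_nonneg hp hq he i _)

variable {v : κ → MvPolynomial σ R} {c : κ → ℕ}

lemma multilinearCoeff_sum_pow_mul_pow_nonneg (hv : ∀ r, (v r).IsHomogeneous (c r))
    (hq : q.IsHomogeneous e) (he : e ≠ 0) {l : R} (hl : 0 ≤ l) (m k : ℕ) :
    0 ≤ multilinearCoeff ((∑ r, rename Sum.inl (v r) * rename Sum.inr (v r)) ^ m *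
      (l • rename Sum.inl q + rename Sum.inr q) ^ k) := by
  simp only [Fintype.sum_pow, Finset.prod_mul_distrib, ← map_prod, Finset.sum_mul, map_sum]
  exact Finset.sum_nonneg fun f _ ↦
    multilinearCoeff_rename_mul_rename_mul_pow_nonneg
      (IsHomogeneous.prod _ _ _ fun i _ ↦ hv (f i)) hq he hl k

lemma multilinearCoeff_sum_pow_le_sum_add_pow (hv : ∀ r, (v r).IsHomogeneous (c r))
    (hq : q.IsHomogeneous e) (he : e ≠ 0) {l : R} (hl : 0 ≤ l) (n : ℕ) :
    multilinearCoeff ((∑ r, rename Sum.inl (v r) * rename Sum.inr (v r)) ^ n) ≤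
      multilinearCoeff ((∑ r, rename Sum.inl (v r) * rename Sum.inr (v r) +
        (l • rename Sum.inl q + rename Sum.inr q)) ^ n) := by
  rw [add_pow, Finset.sum_range_succ, map_add]
  simp only [tsub_self, pow_zero, mul_one, Nat.choose_self, Nat.cast_one, ← nsmul_eq_mul',
    map_sum, map_nsmul]
  exact le_add_of_nonneg_left <| Finset.sum_nonneg fun m _ ↦
    nsmul_nonneg (multilinearCoeff_sum_pow_mul_pow_nonneg hv hq he hl m _) _

end Positivity

open scoped ComplexOrder MatrixOrder Matrix.Norms.L2Operator in
lemma exists_eq_conjTranspose_mul_self {𝕜 n : Type*} [RCLike 𝕜] [Fintype n] {B : Matrix n n 𝕜}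
    (hB : B.PosSemidef) : ∃ V : Matrix n n 𝕜, B = Vᴴ * V := by
  classical exact CStarAlgebra.nonneg_iff_eq_star_mul_self.mp hB.nonneg

theorem hafnian_block_ge_per_general (n : ℕ) (A B : Matrix (Fin n) (Fin n) ℝ)
    (hB : B.PosSemidef) (l : ℝ) (hl : 0 ≤ l) :
    per B ≤ haf ((Matrix.fromBlocks (l • A) B B A).submatrix
      (blockIndex n).symm (blockIndex n).symm) := by
  obtain ⟨V, hV⟩ := exists_eq_conjTranspose_mul_self (hB.smul zero_le_two (a := (2 : ℝ)))
  have haf_eq := factorial_mul_two_pow_mul_haf_submatrix_symm (blockIndex n)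
    (Matrix.fromBlocks (l • A) B B A)
  have per_eq : n.factorial * 2 ^ n * per B =
      multilinearCoeff (bilinearPolynomial ((2 : ℝ) • B) ^ n) := by
    simpa [per_eq_permanent, mul_assoc] using
      (multilinearCoeff_bilinearPolynomial_pow ((2 : ℝ) • B)).symm
  rw [quadraticPolynomial_fromBlocks, show Bᵀ = B from hB.isHermitian, ← two_smul ℝ B,
    quadraticPolynomial_smul, map_smul] at haf_eq
  refine le_of_mul_le_mul_left ?_ (by positivity : (0 : ℝ) < n.factorial * 2 ^ n)
  rw [haf_eq, per_eq, hV, V.conjTranspose_eq_transpose_of_trivial,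
    bilinearPolynomial_transpose_mul]
  exact multilinearCoeff_sum_pow_le_sum_add_pow V.toMvPolynomial_isHomogeneous
    (isHomogeneous_quadraticPolynomial A) two_ne_zero hl n

theorem hafnian_block_ge_per (n : ℕ) (A B : Matrix (Fin n) (Fin n) ℝ)
    (hA : Aᵀ = A) (hBsymm : Bᵀ = B)
    (hBpsd : ∀ x : Fin n → ℝ, 0 ≤ x ⬝ᵥ B *ᵥ x)
    (l : ℝ) (hl : 0 ≤ l) :
    per B ≤ haf ((Matrix.fromBlocks (l • A) B B A).submatrix
      (blockIndex n).symm (blockIndex n).symm) :=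
  hafnian_block_ge_per_general n A B (.of_dotProduct_mulVec_nonneg hBsymm hBpsd) l hl
end

section
/- Let A = (a_{i,j}) be a positive semi-definite symmetric real n×n matrix. Then the hafnian of the 2n×2n block matrix [[A, A], [A, A]] (consisting of four copies of A) satisfies haf [[A, A], [A, A]] ≥ ∏_{i=1}^n a_{i,i}, with equality if and only if A has a zero row or A is a diagonal matrix. -/
open Matrix BigOperators

/-!
Factor `A = B * Bᵀ` and let `F = ∏ i, ∑ s, B i s * X s`, a form of degree `n`. In the Fischer
product, for which multiplication by `X s` is adjoint to `∂/∂X s`, one has `⟨F, F⟩ = permanent A`,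
and since `⟨(∑ s, X s ^ 2) ^ n, G⟩ = Δ ^ n G` for forms `G` of degree `2 * n`, also
`Δ ^ n (F ^ 2) = 2 ^ n * n! * haf [[A, A], [A, A]]`. Expanding `Δ ^ n (F * F)` by the Leibniz rule,
the terms in which every `Δ` differentiates both factors add up to `2 ^ n * n! * ⟨F, F⟩`; the others
are nonnegative, and vanish when `Δ F = 0`. Hence the hafnian is at least the permanent.

Write `l_v` for the linear form with coefficient vector `v`. Since
`‖l_v * G‖² = |v|² ‖G‖² + ‖∂_v G‖²`, splitting off one linear factor of `F` at a time gives
`∏ i, A i i ≤ permanent A`. If `A` has no zero row and `v`, `w` are distinct non-orthogonal rows of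
`B`, the inequality is already strict for `F = l_v * G`: as `∂_v l_w ≠ 0`, the derivative `∂_v`
lowers the multiplicity of the factor `l_w` of `G`, so `∂_v G ≠ 0`. Otherwise `F = 0` or the rows of
`B` are pairwise orthogonal; either way `Δ F = 0`, so the hafnian equals the permanent.
-/

open MvPolynomial

section Derivation

variable {R A κ : Type*} [CommSemiring R]

theorem derivation_prod [CommSemiring A] [Algebra R A] [DecidableEq κ] (D : Derivation R A A)
    (f : κ → A) (S : Finset κ) :
    D (∏ i ∈ S, f i) = ∑ p ∈ S, ∏ i ∈ S, Function.update f p (D (f p)) i := by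
  induction S using Finset.induction_on with
  | empty => simp
  | insert a S ha ih =>
    have hS : ∀ i ∈ S, i ≠ a := fun i hi ↦ ne_of_mem_of_not_mem hi ha
    rw [Finset.prod_insert ha, D.leibniz, ih, Finset.sum_insert ha, Finset.prod_insert ha,
      add_comm, smul_eq_mul, smul_eq_mul, Finset.mul_sum, Function.update_self, mul_comm]
    congr 1
    · congr 1
      exact Finset.prod_congr rfl fun i hi ↦ (Function.update_of_ne (hS i hi) _ _).symm
    · refine Finset.sum_congr rfl fun p hp ↦ ?_
      rw [Finset.prod_insert ha, Function.update_of_ne (hS p hp).symm]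

-- `swap none p ∘ some` is an enumeration by `κ` of the complement of `p`.
theorem derivation_prod_option [CommSemiring A] [Algebra R A] [Fintype κ] [DecidableEq κ]
    (D : Derivation R A A) (f : Option κ → A) :
    D (∏ i, f i) = ∑ p, D (f p) * ∏ i, f (Equiv.swap none p (some i)) := by
  rw [derivation_prod]
  refine Finset.sum_congr rfl fun p _ ↦ ?_
  rw [← Equiv.prod_comp (Equiv.swap none p), Fintype.prod_option, Equiv.swap_apply_left,
    Function.update_self]
  congr 1
  refine Finset.prod_congr rfl fun i _ ↦ Function.update_of_ne ?_ _ _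
  rw [Ne, Equiv.swap_apply_eq_iff, Equiv.swap_apply_right]
  exact Option.some_ne_none i

theorem derivation_ne_zero_of_dvd [CommRing A] [IsDomain A] [Algebra R A] [Algebra ℚ A]
    (D : Derivation R A A) {l F : A} (hl : IsUnit (D l)) (hlF : l ∣ F)
    (hfin : FiniteMultiplicity l F) : D F ≠ 0 := by
  obtain ⟨G, hFG, hG⟩ := hfin.exists_eq_pow_mul_and_not_dvd
  obtain ⟨k, hk⟩ := Nat.exists_eq_add_one_of_ne_zero (multiplicity_ne_zero.mpr hlF)
  rw [hk] at hFG
  have hlk : l ^ k ≠ 0 := fun h ↦ hfin.ne_zero (by rw [hFG, pow_succ, h, zero_mul, zero_mul])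
  have hunit : IsUnit (((k + 1 : ℕ) : A) * D l) := by
    refine IsUnit.mul ?_ hl
    simpa using (IsUnit.mk0 ((k + 1 : ℕ) : ℚ) (by positivity)).map (algebraMap ℚ A)
  intro hDF
  have hfactor : l ^ k * ((k + 1 : ℕ) * D l * G + l * D G) = 0 := by
    rw [← hDF, hFG, D.leibniz, D.leibniz_pow]
    simp only [smul_eq_mul, nsmul_eq_mul, Nat.add_sub_cancel]
    ring
  refine hG (hunit.dvd_mul_left.mp ⟨-D G, ?_⟩)
  linear_combination (mul_eq_zero.mp hfactor).resolve_left hlk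

end Derivation

section Permanent

variable {κ R : Type*} [Fintype κ] [DecidableEq κ] [CommSemiring R]

theorem permanent_submatrix_equiv_self {κ' : Type*} [Fintype κ'] [DecidableEq κ'] (e : κ' ≃ κ)
    (M : Matrix κ κ R) :
    (M.submatrix e e).permanent = M.permanent := by
  rw [permanent, permanent, ← Equiv.sum_comp e.permCongr]
  refine Finset.sum_congr rfl fun σ _ ↦ ?_
  rw [← Equiv.prod_comp e]
  simp [Equiv.permCongr_apply]

theorem permanent_option (M : Matrix (Option κ) (Option κ) R) :
    M.permanent =
      ∑ p, M p none * (M.submatrix (fun i ↦ Equiv.swap none p (some i)) some).permanent := by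
  rw [permanent, ← Equiv.sum_comp Equiv.Perm.decomposeOption.symm, Fintype.sum_prod_type]
  refine Finset.sum_congr rfl fun p _ ↦ ?_
  rw [permanent, Finset.mul_sum]
  refine Finset.sum_congr rfl fun σ _ ↦ ?_
  simp [Fintype.prod_option]

theorem permanent_eq_prod_diag {M : Matrix κ κ R} (h : (∃ i, ∀ j, M i j = 0) ∨ M.IsDiag) :
    M.permanent = ∏ i, M i i := by
  rcases h with ⟨i, hi⟩ | hdiag
  · rw [Finset.prod_eq_zero (f := fun k ↦ M k k) (Finset.mem_univ i) (hi i)]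
    exact Finset.sum_eq_zero fun σ _ ↦
      Finset.prod_eq_zero (Finset.mem_univ (σ.symm i)) (by simp [hi])
  · rw [← hdiag.diagonal_diag, permanent_diagonal]
    simp

end Permanent

section LinearForms

variable {ι R : Type*} [CommSemiring R]

theorem pderiv_comm (s t : ι) (F : MvPolynomial ι R) :
    pderiv s (pderiv t F) = pderiv t (pderiv s F) := by
  classical
  ext m
  rcases eq_or_ne s t with rfl | h
  · rfl
  · simp only [coeff_pderiv, Finsupp.add_apply, Finsupp.single_eq_of_ne h,
      Finsupp.single_eq_of_ne h.symm, add_zero, add_right_comm m]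
    ring

variable [Fintype ι]

/-- The linear form `∑ s, v s * X s` with coefficient vector `v`. -/
noncomputable def linForm (v : ι → R) : MvPolynomial ι R := ∑ s, C (v s) * X s

/-- The derivative in the direction of the vector `v`. -/
noncomputable def dirDeriv (v : ι → R) : Derivation R (MvPolynomial ι R) (MvPolynomial ι R) :=
  ∑ s, v s • pderiv s

/-- The Laplacian `∑ s, ∂²/∂X_s²` on polynomials; being an element of `Module.End`, its iterates
are written as powers. -/
noncomputable def laplacian : Module.End R (MvPolynomial ι R) :=
  ∑ s, (pderiv s).toLinearMap ∘ₗ (pderiv s).toLinearMap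

theorem dirDeriv_apply (v : ι → R) (F : MvPolynomial ι R) :
    dirDeriv v F = ∑ s, C (v s) * pderiv s F := by
  rw [dirDeriv, ← Derivation.coeFnAddMonoidHom_apply, map_sum, Finset.sum_apply]
  simp [C_mul']

theorem laplacian_apply (F : MvPolynomial ι R) :
    laplacian F = ∑ s, pderiv s (pderiv s F) := by
  simp [laplacian]

theorem isHomogeneous_linForm (v : ι → R) : (linForm v).IsHomogeneous 1 :=
  IsHomogeneous.sum _ _ _ fun s _ ↦ by
    simpa using (isHomogeneous_C ι (v s)).mul (isHomogeneous_X R s)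

theorem isHomogeneous_prod_linForm {κ : Type*} [Fintype κ] (B : Matrix κ ι R) :
    (∏ i, linForm (B i)).IsHomogeneous (Fintype.card κ) := by
  simpa using IsHomogeneous.prod Finset.univ _ (fun _ ↦ 1) fun i _ ↦ isHomogeneous_linForm (B i)

theorem pderiv_linForm (s : ι) (v : ι → R) : pderiv s (linForm v) = C (v s) := by
  classical
  simp [linForm, pderiv_X, Pi.single_apply]

theorem linForm_one [DecidableEq ι] (s : ι) : linForm ((1 : Matrix ι ι R) s) = X s := by
  simp [linForm, one_apply]

theorem linForm_ne_zero {v : ι → R} (hv : v ≠ 0) : linForm v ≠ 0 := by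
  refine fun h ↦ hv (funext fun s ↦ C_injective ι R ?_)
  rw [← pderiv_linForm, h, map_zero, Pi.zero_apply, C_0]

theorem dirDeriv_linForm (v w : ι → R) : dirDeriv v (linForm w) = C (v ⬝ᵥ w) := by
  simp [dirDeriv_apply, pderiv_linForm, dotProduct]

theorem pderiv_laplacian_pow (k : ℕ) (s : ι) (F : MvPolynomial ι R) :
    pderiv s ((laplacian ^ k) F) = (laplacian ^ k) (pderiv s F) := by
  induction k generalizing F with
  | zero => rfl
  | succ k ih =>
    rw [pow_succ, Module.End.mul_apply, ih, Module.End.mul_apply, laplacian_apply, map_sum,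
      laplacian_apply]
    simp_rw [pderiv_comm s]

theorem laplacian_mul (F G : MvPolynomial ι R) :
    laplacian (F * G) =
      laplacian F * G + F * laplacian G + 2 * ∑ s, pderiv s F * pderiv s G := by
  simp only [laplacian_apply, Finset.sum_mul, Finset.mul_sum, ← Finset.sum_add_distrib]
  refine Finset.sum_congr rfl fun s _ ↦ ?_
  simp only [pderiv_mul, map_add]
  ring

theorem laplacian_linForm_mul (v : ι → R) (F : MvPolynomial ι R) :
    laplacian (linForm v * F) = linForm v * laplacian F + 2 * dirDeriv v F := by
  rw [laplacian_mul, laplacian_apply (linForm v), dirDeriv_apply]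
  simp [pderiv_linForm]

theorem constantCoeff_laplacian_pow_succ_mul (N : ℕ) (F G : MvPolynomial ι R) :
    constantCoeff ((laplacian ^ (N + 1)) (F * G)) =
      constantCoeff ((laplacian ^ N) (laplacian F * G)) +
        constantCoeff ((laplacian ^ N) (F * laplacian G)) +
        2 * ∑ s, constantCoeff ((laplacian ^ N) (pderiv s F * pderiv s G)) := by
  rw [pow_succ, Module.End.mul_apply, laplacian_mul, two_mul, two_mul]
  simp only [map_add, map_sum]

variable {κ : Type*}

theorem dirDeriv_prod_linForm_eq_zero {S : Finset κ} {v : ι → R} {B : Matrix κ ι R}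
    (h : ∀ i ∈ S, v ⬝ᵥ B i = 0) : dirDeriv v (∏ i ∈ S, linForm (B i)) = 0 := by
  classical
  induction S using Finset.induction_on with
  | empty => simp
  | insert a S ha ih =>
    rw [Finset.forall_mem_insert] at h
    rw [Finset.prod_insert ha, Derivation.leibniz, dirDeriv_linForm, h.1, ih h.2]
    simp

theorem laplacian_prod_linForm_eq_zero {B : Matrix κ ι R} (S : Finset κ)
    (h : Pairwise fun i j ↦ B i ⬝ᵥ B j = 0) : laplacian (∏ i ∈ S, linForm (B i)) = 0 := by
  classical
  induction S using Finset.induction_on with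
  | empty => simp [laplacian_apply]
  | insert a S ha ih =>
    rw [Finset.prod_insert ha, laplacian_linForm_mul, ih,
      dirDeriv_prod_linForm_eq_zero fun i hi ↦ h (ne_of_mem_of_not_mem hi ha).symm]
    simp

end LinearForms

section Fischer

variable {ι R : Type*} [Fintype ι] [CommSemiring R]

/-- The Fischer product `∑ m, m! F_m G_m` of two polynomials with coefficients `F_m` and `G_m`,
where `m! = ∏ s, (m s)!`. -/
noncomputable def fischer : MvPolynomial ι R →ₗ[R] MvPolynomial ι R →ₗ[R] R :=
  (basisMonomials ι R).constr R fun m ↦ ((∏ s, (m s).factorial : ℕ) : R) • lcoeff R m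

theorem fischer_monomial (m : ι →₀ ℕ) (a : R) (G : MvPolynomial ι R) :
    fischer (monomial m a) G = (∏ s, (m s).factorial : ℕ) * (a * coeff m G) := by
  have h : monomial m a = a • basisMonomials ι R m := by simp [smul_monomial]
  rw [h, map_smul, fischer, Module.Basis.constr_basis]
  simp [mul_left_comm]

theorem fischer_C (a : R) (G : MvPolynomial ι R) : fischer (C a) G = a * constantCoeff G := by
  simpa [constantCoeff_eq] using fischer_monomial 0 a G

theorem fischer_apply (F G : MvPolynomial ι R) :
    fischer F G = ∑ m ∈ F.support, (∏ s, (m s).factorial : ℕ) * (coeff m F * coeff m G) := by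
  conv_lhs => rw [F.as_sum]
  simp only [map_sum, LinearMap.sum_apply, fischer_monomial]

theorem fischer_comm (F G : MvPolynomial ι R) : fischer F G = fischer G F := by
  classical
  have h : fischer = (fischer : MvPolynomial ι R →ₗ[R] _).flip := by
    refine (basisMonomials ι R).ext fun m ↦ (basisMonomials ι R).ext fun m' ↦ ?_
    rw [LinearMap.flip_apply, coe_basisMonomials, fischer_monomial, fischer_monomial,
      coeff_monomial, coeff_monomial]
    rcases eq_or_ne m m' with rfl | hm
    · rfl
    · simp [hm, hm.symm]
  exact LinearMap.congr_fun₂ h F G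

theorem prod_factorial_add_single (m : ι →₀ ℕ) (s : ι) :
    ∏ t, ((m + Finsupp.single s 1 : ι →₀ ℕ) t).factorial = (m s + 1) * ∏ t, (m t).factorial := by
  classical
  rw [← Finset.mul_prod_erase _ _ (Finset.mem_univ s),
    ← Finset.mul_prod_erase _ _ (Finset.mem_univ s), ← mul_assoc, ← Nat.factorial_succ]
  congr 1
  · simp
  · refine Finset.prod_congr rfl fun t ht ↦ ?_
    simp [Finset.ne_of_mem_erase ht]

theorem fischer_X_mul (s : ι) (F G : MvPolynomial ι R) :
    fischer (X s * F) G = fischer F (pderiv s G) := by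
  induction F using MvPolynomial.induction_on' with
  | monomial m a =>
    rw [mul_comm, X, monomial_mul, fischer_monomial, fischer_monomial, coeff_pderiv,
      prod_factorial_add_single]
    push_cast
    ring
  | add F₁ F₂ h₁ h₂ =>
    rw [mul_add, map_add, map_add, LinearMap.add_apply, LinearMap.add_apply, h₁, h₂]

theorem fischer_linForm_mul (v : ι → R) (F G : MvPolynomial ι R) :
    fischer (linForm v * F) G = fischer F (dirDeriv v G) := by
  simp [linForm, dirDeriv_apply, Finset.sum_mul, C_mul', fischer_X_mul]

theorem fischer_sum_X_sq_pow (k : ℕ) (F : MvPolynomial ι R) :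
    fischer ((∑ s, X s ^ 2) ^ k) F = constantCoeff ((laplacian ^ k) F) := by
  induction k generalizing F with
  | zero => simpa using fischer_C 1 F
  | succ k ih =>
    rw [pow_succ (laplacian (ι := ι)), Module.End.mul_apply, ← ih, laplacian_apply, pow_succ',
      Finset.sum_mul, map_sum, map_sum, LinearMap.sum_apply]
    simp only [sq, mul_assoc, fischer_X_mul]

theorem fischer_eq_zero_of_isHomogeneous_of_ne {F G : MvPolynomial ι R} {m n : ℕ}
    (hF : F.IsHomogeneous m) (hG : G.IsHomogeneous n) (hmn : m ≠ n) : fischer F G = 0 := by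
  rw [fischer_apply]
  refine Finset.sum_eq_zero fun d _ ↦ ?_
  rcases eq_or_ne d.degree m with hd | hd
  · rw [hG.coeff_eq_zero (hd.trans_ne hmn), mul_zero, mul_zero]
  · rw [hF.coeff_eq_zero hd, zero_mul, mul_zero]

theorem constantCoeff_laplacian_pow_eq_zero {F : MvPolynomial ι R} {n k : ℕ}
    (hF : F.IsHomogeneous n) (h : n ≠ 2 * k) : constantCoeff ((laplacian ^ k) F) = 0 := by
  rw [← fischer_sum_X_sq_pow]
  refine fischer_eq_zero_of_isHomogeneous_of_ne (.pow (.sum _ _ _ fun s _ ↦ ?_) k) hF h.symm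
  simpa using (isHomogeneous_X R s).pow 2

theorem sum_fischer_pderiv {F : MvPolynomial ι R} {n : ℕ} (hF : F.IsHomogeneous n)
    (G : MvPolynomial ι R) : ∑ s, fischer (pderiv s F) (pderiv s G) = n * fischer F G := by
  simp only [← fischer_X_mul]
  rw [← LinearMap.sum_apply, ← map_sum, hF.sum_X_mul_pderiv, map_nsmul]
  simp

theorem fischer_self_of_isHomogeneous_zero {F : MvPolynomial ι R} (hF : F.IsHomogeneous 0) :
    fischer F F = constantCoeff F * constantCoeff F := by
  rw [← totalDegree_zero_iff_isHomogeneous, totalDegree_eq_zero_iff_eq_C] at hF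
  rw [hF, fischer_C, constantCoeff_C]

theorem constantCoeff_laplacian_pow_mul_self_of_laplacian_eq_zero {F : MvPolynomial ι R} {n : ℕ}
    (hF : F.IsHomogeneous n) (hΔ : laplacian F = 0) :
    constantCoeff ((laplacian ^ n) (F * F)) = 2 ^ n * n.factorial * fischer F F := by
  induction n generalizing F with
  | zero => simp [fischer_self_of_isHomogeneous_zero hF]
  | succ n ih =>
    have hΔ' (s : ι) : laplacian (pderiv s F) = 0 := by
      simpa [hΔ] using (pderiv_laplacian_pow 1 s F).symm
    rw [constantCoeff_laplacian_pow_succ_mul, hΔ, zero_mul, mul_zero, map_zero, map_zero, add_zero,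
      zero_add, Finset.sum_congr rfl fun s _ ↦ ih hF.pderiv (hΔ' s), ← Finset.mul_sum,
      sum_fischer_pderiv hF, Nat.factorial_succ]
    push_cast
    ring

theorem fischer_linForm_mul_self (v : ι → R) (F : MvPolynomial ι R) :
    fischer (linForm v * F) (linForm v * F) =
      v ⬝ᵥ v * fischer F F + fischer (dirDeriv v F) (dirDeriv v F) := by
  rw [fischer_linForm_mul, Derivation.leibniz, dirDeriv_linForm, map_add, smul_eq_mul, smul_eq_mul,
    fischer_comm F (linForm v * _), fischer_linForm_mul, mul_comm F, C_mul', map_smul, smul_eq_mul,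
    add_comm]

-- Adjointness moves one factor of the first product to a derivative of the second one, whose
-- Leibniz expansion is the expansion of the permanent along a column.
theorem fischer_prod_linForm {κ : Type*} [Fintype κ] [DecidableEq κ] (B B' : Matrix κ ι R) :
    fischer (∏ i, linForm (B i)) (∏ i, linForm (B' i)) = (B' * Bᵀ).permanent := by
  refine Fintype.induction_empty_option
    (P := fun κ _ ↦ ∀ [DecidableEq κ] (B B' : Matrix κ ι R),
      fischer (∏ i, linForm (B i)) (∏ i, linForm (B' i)) = (B' * Bᵀ).permanent)
    (fun α β _ e ih _ B B' ↦ ?_) (fun B B' ↦ ?_) (fun α _ ih inst B B' ↦ ?_) κ B B'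
  · classical
    let := Fintype.ofEquiv β e.symm
    rw [← permanent_submatrix_equiv_self e, ← Equiv.prod_comp e, ← Equiv.prod_comp e]
    exact ih (B.submatrix e id) (B'.submatrix e id)
  · simpa [permanent_isEmpty] using fischer_C (1 : R) (1 : MvPolynomial ι R)
  · classical
    obtain rfl : inst = fun a b ↦ Option.instDecidableEq a b := Subsingleton.elim _ _
    rw [permanent_option, Fintype.prod_option, fischer_linForm_mul, derivation_prod_option, map_sum]
    refine Finset.sum_congr rfl fun p _ ↦ ?_
    rw [dirDeriv_linForm, C_mul', map_smul, smul_eq_mul, dotProduct_comm]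
    exact congrArg (B' p ⬝ᵥ B none * ·)
      (ih (B.submatrix some id) (B'.submatrix (fun i ↦ Equiv.swap none p (some i)) id))

theorem fischer_prod_X {κ : Type*} [Fintype κ] [DecidableEq κ] (s : κ → ι) (B : Matrix κ ι R) :
    fischer (∏ k, X (s k)) (∏ k, linForm (B k)) = (B.submatrix id s).permanent := by
  classical
  have hB : B.submatrix id s = B * ((1 : Matrix ι ι R).submatrix s id)ᵀ := by
    rw [transpose_submatrix, transpose_one]
    exact (mul_submatrix_one (Equiv.refl ι) s B).symm
  rw [hB, ← fischer_prod_linForm]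
  congr! 3 with k
  exact (linForm_one (s k)).symm

end Fischer

section Positivity

variable {ι R : Type*} [Fintype ι] [CommRing R] [LinearOrder R] [IsStrictOrderedRing R]

theorem fischer_self_nonneg (F : MvPolynomial ι R) : 0 ≤ fischer F F := by
  rw [fischer_apply]
  exact Finset.sum_nonneg fun m _ ↦ mul_nonneg (Nat.cast_nonneg _) (mul_self_nonneg _)

theorem fischer_self_pos {F : MvPolynomial ι R} (hF : F ≠ 0) : 0 < fischer F F := by
  rw [fischer_apply]
  refine Finset.sum_pos (fun m hm ↦ mul_pos ?_ ?_) (support_nonempty.mpr hF)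
  · exact Nat.cast_pos.mpr (Finset.prod_pos fun s _ ↦ (m s).factorial_pos)
  · exact mul_self_pos.mpr (mem_support_iff.mp hm)

-- The exponents `k` and `l` are arbitrary because the Leibniz rule preserves this shape: a
-- Laplacian raises `k` or `l` by one, or turns `F` into one of its partial derivatives.
theorem constantCoeff_laplacian_pow_mul_nonneg {F : MvPolynomial ι R} {n : ℕ}
    (hF : F.IsHomogeneous n) (N k l : ℕ) :
    0 ≤ constantCoeff ((laplacian ^ N) ((laplacian ^ k) F * (laplacian ^ l) F)) := by
  induction N generalizing F n k l with
  | zero =>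
    rw [pow_zero, Module.End.one_apply, map_mul]
    rcases eq_or_ne k l with rfl | hkl
    · exact mul_self_nonneg _
    · rcases ne_or_eq n (2 * k) with hn | rfl
      · rw [constantCoeff_laplacian_pow_eq_zero hF hn, zero_mul]
      · rw [constantCoeff_laplacian_pow_eq_zero (k := l) hF (by omega), mul_zero]
  | succ N ih =>
    rw [constantCoeff_laplacian_pow_succ_mul, ← Module.End.mul_apply, ← Module.End.mul_apply,
      ← pow_succ', ← pow_succ']
    simp only [pderiv_laplacian_pow]
    have hleft := ih hF (k + 1) l
    have hright := ih hF k (l + 1)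
    have hcross := Finset.sum_nonneg fun s (_ : s ∈ Finset.univ) ↦ ih (hF.pderiv (i := s)) k l
    exact add_nonneg (add_nonneg hleft hright) (mul_nonneg zero_le_two hcross)

theorem fischer_self_le_constantCoeff_laplacian_pow_mul_self {F : MvPolynomial ι R} {n : ℕ}
    (hF : F.IsHomogeneous n) :
    2 ^ n * n.factorial * fischer F F ≤ constantCoeff ((laplacian ^ n) (F * F)) := by
  induction n generalizing F with
  | zero => simp [fischer_self_of_isHomogeneous_zero hF]
  | succ n ih =>
    have hleft := constantCoeff_laplacian_pow_mul_nonneg hF n 1 0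
    have hright := constantCoeff_laplacian_pow_mul_nonneg hF n 0 1
    rw [pow_one, pow_zero, Module.End.one_apply] at hleft hright
    rw [constantCoeff_laplacian_pow_succ_mul]
    calc 2 ^ (n + 1) * (n + 1).factorial * fischer F F
        = 2 * ∑ s, 2 ^ n * n.factorial * fischer (pderiv s F) (pderiv s F) := by
          rw [← Finset.mul_sum, sum_fischer_pderiv hF, Nat.factorial_succ]
          push_cast
          ring
      _ ≤ 2 * ∑ s, constantCoeff ((laplacian ^ n) (pderiv s F * pderiv s F)) := by
          gcongr with s
          exact ih hF.pderiv
      _ ≤ _ := le_add_of_nonneg_left (add_nonneg hleft hright)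

theorem prod_dotProduct_self_le_fischer {κ : Type*} (B : Matrix κ ι R) (S : Finset κ) :
    ∏ i ∈ S, B i ⬝ᵥ B i ≤ fischer (∏ i ∈ S, linForm (B i)) (∏ i ∈ S, linForm (B i)) := by
  classical
  induction S using Finset.induction_on with
  | empty => simpa using (fischer_C (1 : R) (1 : MvPolynomial ι R)).ge
  | insert a S ha ih =>
    rw [Finset.prod_insert ha, Finset.prod_insert ha, fischer_linForm_mul_self]
    exact le_add_of_le_of_nonneg
      (mul_le_mul_of_nonneg_left ih (Finset.sum_nonneg fun _ _ ↦ mul_self_nonneg _))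
      (fischer_self_nonneg _)

end Positivity

section Strictness

variable {ι K : Type*} [Fintype ι] [Field K]

theorem dirDeriv_ne_zero_of_linForm_dvd [CharZero K] {v w : ι → K} {F : MvPolynomial ι K}
    (hF : F ≠ 0) (hvw : v ⬝ᵥ w ≠ 0) (hw : linForm w ∣ F) : dirDeriv v F ≠ 0 := by
  refine derivation_ne_zero_of_dvd _ ?_ hw (.of_not_isUnit (fun h ↦ ?_) hF)
  · rw [dirDeriv_linForm]
    exact (IsUnit.mk0 _ hvw).map C
  · simpa [linForm] using h.map constantCoeff

theorem prod_dotProduct_self_lt_fischer [LinearOrder K] [IsStrictOrderedRing K] {κ : Type*}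
    [Fintype κ] {B : Matrix κ ι K} (hB : ∀ i, B i ≠ 0) {i j : κ} (hij : i ≠ j)
    (h : B i ⬝ᵥ B j ≠ 0) :
    ∏ i, B i ⬝ᵥ B i < fischer (∏ i, linForm (B i)) (∏ i, linForm (B i)) := by
  classical
  rw [← Finset.mul_prod_erase _ _ (Finset.mem_univ i),
    ← Finset.mul_prod_erase _ (fun i ↦ linForm (B i)) (Finset.mem_univ i), fischer_linForm_mul_self]
  refine lt_add_of_le_of_pos (mul_le_mul_of_nonneg_left (prod_dotProduct_self_le_fischer B _)
    (Finset.sum_nonneg fun _ _ ↦ mul_self_nonneg _)) (fischer_self_pos ?_)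
  exact dirDeriv_ne_zero_of_linForm_dvd
    (Finset.prod_ne_zero_iff.mpr fun k _ ↦ linForm_ne_zero (hB k)) h
    (Finset.dvd_prod_of_mem _ (Finset.mem_erase.mpr ⟨hij.symm, Finset.mem_univ j⟩))

end Strictness

section Hafnian

variable {m : ℕ}

/-- The index of the pair `{2 * i, 2 * i + 1}` containing `k`, in the partition of `Fin (2 * m)`
into consecutive pairs. -/
def pairIndex (k : Fin (2 * m)) : Fin m := ⟨k / 2, by omega⟩

theorem pairIndex_two_mul (i : Fin m) : pairIndex ⟨2 * i, by omega⟩ = i :=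
  Fin.ext (by simp [pairIndex])

theorem pairIndex_two_mul_add_one (i : Fin m) : pairIndex ⟨2 * i + 1, by omega⟩ = i :=
  Fin.ext (by change (2 * i.val + 1) / 2 = i.val; omega)

theorem prod_fin_two_mul {M : Type*} [CommMonoid M] (f : Fin (2 * m) → M) :
    ∏ k, f k = ∏ i : Fin m, f ⟨2 * i, by omega⟩ * f ⟨2 * i + 1, by omega⟩ := by
  rw [← Equiv.prod_comp (finProdFinEquiv.trans (finCongr (mul_comm m 2))), Fintype.prod_prod_type]
  refine Finset.prod_congr rfl fun i _ ↦ ?_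
  rw [Fin.prod_univ_two]
  congr 2 <;> ext <;> simp [finProdFinEquiv, add_comm]

theorem sum_X_sq_pow {ι R : Type*} [Fintype ι] [CommSemiring R] :
    (∑ t, (X t : MvPolynomial ι R) ^ 2) ^ m =
      ∑ s : Fin m → ι, ∏ k : Fin (2 * m), X (s (pairIndex k)) := by
  rw [Fintype.sum_pow]
  refine Finset.sum_congr rfl fun s _ ↦ ?_
  simp only [prod_fin_two_mul, pairIndex_two_mul, pairIndex_two_mul_add_one, sq]

theorem haf_two_mul (A : Matrix (Fin (2 * m)) (Fin (2 * m)) ℝ) :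
    2 ^ m * m.factorial * haf A =
      ∑ σ : Equiv.Perm (Fin (2 * m)),
        ∏ i : Fin m, A (σ ⟨2 * i, by omega⟩) (σ ⟨2 * i + 1, by omega⟩) := by
  have hm : 2 * m / 2 = m := by omega
  calc 2 ^ m * m.factorial * haf A
      = 2 ^ (2 * m / 2) * (2 * m / 2).factorial * haf A := by rw [hm]
    _ = ∑ σ : Equiv.Perm (Fin (2 * m)), ∏ i : Fin (2 * m / 2),
          A (σ ⟨2 * i, by omega⟩) (σ ⟨2 * i + 1, by omega⟩) := by
        rw [haf, if_pos (even_two_mul m)]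
        field_simp
    _ = ∑ σ : Equiv.Perm (Fin (2 * m)),
          ∏ i : Fin m, A (σ ⟨2 * i, by omega⟩) (σ ⟨2 * i + 1, by omega⟩) :=
        Finset.sum_congr rfl fun σ _ ↦ (finCongr hm).prod_comp fun i : Fin m ↦
          A (σ ⟨2 * i, by omega⟩) (σ ⟨2 * i + 1, by omega⟩)

theorem haf_mul_transpose {ι : Type*} [Fintype ι] (B : Matrix (Fin (2 * m)) ι ℝ) :
    2 ^ m * m.factorial * haf (B * Bᵀ) = constantCoeff ((laplacian ^ m) (∏ k, linForm (B k))) := by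
  calc 2 ^ m * m.factorial * haf (B * Bᵀ)
      = ∑ σ : Equiv.Perm (Fin (2 * m)), ∑ s : Fin m → ι,
          ∏ i : Fin m, B (σ ⟨2 * i, by omega⟩) (s i) * B (σ ⟨2 * i + 1, by omega⟩) (s i) := by
        rw [haf_two_mul]
        exact Finset.sum_congr rfl fun σ _ ↦ Fintype.prod_sum _
    _ = ∑ s : Fin m → ι, (B.submatrix id (s ∘ pairIndex)).permanent := by
        rw [Finset.sum_comm]
        simp only [permanent, prod_fin_two_mul, submatrix_apply, id_eq, Function.comp_apply,
          pairIndex_two_mul, pairIndex_two_mul_add_one]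
    _ = fischer ((∑ t, X t ^ 2) ^ m) (∏ k, linForm (B k)) := by
        rw [sum_X_sq_pow, map_sum, LinearMap.sum_apply]
        exact Finset.sum_congr rfl fun s _ ↦ (fischer_prod_X (s ∘ pairIndex) B).symm
    _ = constantCoeff ((laplacian ^ m) (∏ k, linForm (B k))) := fischer_sum_X_sq_pow m _

/-- The block matrix `[[A, A], [A, A]]`, reindexed by `Fin (2 * n)` so that its hafnian can be
formed. -/
abbrev doubled {n : ℕ} (A : Matrix (Fin n) (Fin n) ℝ) : Matrix (Fin (2 * n)) (Fin (2 * n)) ℝ :=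
  (fromBlocks A A A A).submatrix (blockIndex n).symm (blockIndex n).symm

theorem haf_doubled_mul_transpose {ι : Type*} [Fintype ι] {n : ℕ} (B : Matrix (Fin n) ι ℝ) :
    2 ^ n * n.factorial * haf (doubled (B * Bᵀ)) =
      constantCoeff ((laplacian ^ n) ((∏ i, linForm (B i)) * ∏ i, linForm (B i))) := by
  have h : doubled (B * Bᵀ) =
      (fromRows B B).submatrix (blockIndex n).symm id *
        ((fromRows B B).submatrix (blockIndex n).symm id)ᵀ := by
    rw [doubled, ← fromRows_mul_fromCols, ← transpose_fromRows]
    rfl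
  have hprod : ∏ k, linForm (fromRows B B ((blockIndex n).symm k)) =
      (∏ i, linForm (B i)) * ∏ i, linForm (B i) := by
    rw [(blockIndex n).symm.prod_comp fun k ↦ linForm (fromRows B B k), Fintype.prod_sum_type]
    rfl
  rw [h, haf_mul_transpose, ← hprod]
  rfl

end Hafnian

section PosSemidef

open scoped MatrixOrder

variable {κ : Type*} [Fintype κ] {A : Matrix κ κ ℝ}

theorem exists_eq_mul_transpose_of_posSemidef (hA : A.PosSemidef) :
    ∃ B : Matrix κ κ ℝ, A = B * Bᵀ := by
  classical
  obtain ⟨B, rfl⟩ := CStarAlgebra.nonneg_iff_eq_star_mul_self.mp hA.nonneg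
  exact ⟨Bᵀ, by simp [star_eq_conjTranspose]⟩

variable [DecidableEq κ]

theorem prod_diag_le_permanent (hA : A.PosSemidef) : ∏ i, A i i ≤ A.permanent := by
  obtain ⟨B, rfl⟩ := exists_eq_mul_transpose_of_posSemidef hA
  rw [← fischer_prod_linForm]
  exact prod_dotProduct_self_le_fischer B Finset.univ

theorem prod_diag_lt_permanent (hA : A.PosSemidef) (hrow : ∀ i, ∃ j, A i j ≠ 0) {i j : κ}
    (hij : i ≠ j) (h : A i j ≠ 0) : ∏ i, A i i < A.permanent := by
  obtain ⟨B, rfl⟩ := exists_eq_mul_transpose_of_posSemidef hA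
  rw [← fischer_prod_linForm]
  refine prod_dotProduct_self_lt_fischer (fun k hk ↦ ?_) hij h
  obtain ⟨l, hl⟩ := hrow k
  exact hl ((congrArg (· ⬝ᵥ B l) hk).trans (zero_dotProduct _))

variable {n : ℕ} {A : Matrix (Fin n) (Fin n) ℝ}

theorem permanent_le_haf_doubled (hA : A.PosSemidef) : A.permanent ≤ haf (doubled A) := by
  obtain ⟨B, rfl⟩ := exists_eq_mul_transpose_of_posSemidef hA
  refine le_of_mul_le_mul_left ?_ (by positivity : (0 : ℝ) < 2 ^ n * n.factorial)
  rw [haf_doubled_mul_transpose, ← fischer_prod_linForm]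
  exact fischer_self_le_constantCoeff_laplacian_pow_mul_self
    (by simpa using isHomogeneous_prod_linForm B)

theorem haf_doubled_eq_permanent (hA : A.PosSemidef) (h : (∃ i, ∀ j, A i j = 0) ∨ A.IsDiag) :
    haf (doubled A) = A.permanent := by
  obtain ⟨B, rfl⟩ := exists_eq_mul_transpose_of_posSemidef hA
  refine mul_left_cancel₀ (by positivity : (2 ^ n * n.factorial : ℝ) ≠ 0) ?_
  rw [haf_doubled_mul_transpose, ← fischer_prod_linForm]
  refine constantCoeff_laplacian_pow_mul_self_of_laplacian_eq_zero
    (by simpa using isHomogeneous_prod_linForm B) ?_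
  rcases h with ⟨i, hi⟩ | hdiag
  · have hBi : B i = 0 := dotProduct_self_eq_zero.mp (hi i)
    rw [Finset.prod_eq_zero (Finset.mem_univ i) (by simp [hBi, linForm]), map_zero]
  · exact laplacian_prod_linForm_eq_zero _ hdiag

end PosSemidef

theorem hafnian_doubled_ge_prod_diag (n : ℕ) (A : Matrix (Fin n) (Fin n) ℝ)
    (hA : Aᵀ = A) (hApsd : ∀ x : Fin n → ℝ, 0 ≤ x ⬝ᵥ A *ᵥ x) :
    (∏ i, A i i) ≤ haf ((Matrix.fromBlocks A A A A).submatrix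
        (blockIndex n).symm (blockIndex n).symm) ∧
      (haf ((Matrix.fromBlocks A A A A).submatrix
          (blockIndex n).symm (blockIndex n).symm) = ∏ i, A i i
        ↔ (∃ i, ∀ j, A i j = 0) ∨ (∀ i j, i ≠ j → A i j = 0)) := by
  have hpsd : A.PosSemidef := .of_dotProduct_mulVec_nonneg (by simpa [IsHermitian] using hA) hApsd
  refine ⟨(prod_diag_le_permanent hpsd).trans (permanent_le_haf_doubled hpsd), fun heq ↦ ?_,
    fun h ↦ ?_⟩
  · by_contra! hne
    obtain ⟨hrow, i, j, hij, hAij⟩ := hne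
    have hlt : ∏ i, A i i < A.permanent := prod_diag_lt_permanent hpsd hrow hij hAij
    exact (hlt.trans_le (permanent_le_haf_doubled hpsd)).ne' heq
  · replace h : (∃ i, ∀ j, A i j = 0) ∨ A.IsDiag := h.imp_right fun hdiag i j ↦ hdiag i j
    exact (haf_doubled_eq_permanent hpsd h).trans (permanent_eq_prod_diag h)
end

section
/- Let x_1, ..., x_n be vectors in ℝ^d and let ξ be a random vector distributed according to the standard Gaussian measure on ℝ^d. Then E ∏_{i=1}^n (x_i, ξ)² ≥ ∏_{i=1}^n E (x_i, ξ)² = ∏_{i=1}^n |x_i|², where (·,·) is the standard Euclidean inner product. Equality holds if and only if the vectors x_1, ..., x_n are pairwise orthogonal or at least one of them is zero. -/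
open Matrix BigOperators MeasureTheory

/-!
Write `L x` for the linear form `ξ ↦ (x, ξ)` and `∂ₓ` for the derivative in direction `x`. Gaussian
integration by parts says that `A x = L x - ∂ₓ` is the adjoint of `∂ₓ` in `L²` of the Gaussian
measure. Since `∂ₓ A x = A x ∂ₓ + |x|²`, this gives `‖A x p‖² = |x|² ‖p‖² + ‖∂ₓ p‖²`, so the Wick
product `W = A x₁ ⋯ A xₙ 1` satisfies `‖W‖² ≥ ∏ |xᵢ|²`. By adjointness `W` is orthogonal to all
polynomials of degree less than `n`, in particular to `∏ L xᵢ - W`, hence `‖∏ L xᵢ‖² ≥ ‖W‖²`.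

For the equality case, stop the first estimate at the two innermost factors, where
`‖A x A y 1‖² = |x|² |y|² + (x, y)²`: the lower bound improves on `∏ |xᵢ|²` as soon as two of the
vectors have a nonzero inner product and none of them vanishes.
-/

namespace GaussianWick

open MvPolynomial ProbabilityTheory
open scoped NNReal

section OneDimensional

variable {μ : ℝ} {v : ℝ≥0} {f f' : ℝ → ℝ}

lemma integrable_pow_gaussianReal (m : ℕ) : Integrable (fun t => t ^ m) (gaussianReal μ v) :=
  (memLp_id_gaussianReal (m : ℝ≥0)).integrable_norm_pow'.mono' (by fun_prop)
    (.of_forall fun t => by simp)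

lemma integrable_gaussianReal_iff (hv : v ≠ 0) :
    Integrable f (gaussianReal μ v) ↔ Integrable fun t => gaussianPDFReal μ v t * f t := by
  rw [gaussianReal_of_var_ne_zero _ hv,
    integrable_withDensity_iff_integrable_smul' (measurable_gaussianPDF _ _)
      (.of_forall fun _ => gaussianPDF_lt_top)]
  simp only [toReal_gaussianPDF, smul_eq_mul]

lemma hasDerivAt_gaussianPDFReal (t : ℝ) :
    HasDerivAt (gaussianPDFReal μ v) (-((t - μ) / v * gaussianPDFReal μ v t)) t := by
  have h : HasDerivAt (fun t => -(t - μ) ^ 2 / (2 * v)) (-(2 * (t - μ)) / (2 * v)) t := by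
    simpa using ((((hasDerivAt_id t).sub_const μ).pow 2).neg).div_const (2 * (v : ℝ))
  refine (h.exp.const_mul (√(2 * Real.pi * v))⁻¹).congr_deriv ?_
  rw [gaussianPDFReal, ← mul_neg, mul_div_mul_left _ _ two_ne_zero]
  ring

theorem integral_sub_mul_gaussianReal (hf : ∀ t, HasDerivAt f (f' t) t)
    (hf_int : Integrable f (gaussianReal μ v)) (hf'_int : Integrable f' (gaussianReal μ v))
    (hmul_int : Integrable (fun t => (t - μ) * f t) (gaussianReal μ v)) :
    ∫ t, (t - μ) * f t ∂gaussianReal μ v = v * ∫ t, f' t ∂gaussianReal μ v := by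
  rcases eq_or_ne v 0 with rfl | hv
  · simp
  rw [integrable_gaussianReal_iff hv] at hf_int hf'_int hmul_int
  have hparts := integral_mul_deriv_eq_deriv_mul_of_integrable (fun t _ => hf t)
    (fun t _ => hasDerivAt_gaussianPDFReal (μ := μ) (v := v) t)
    ((hmul_int.const_mul (-(v : ℝ)⁻¹)).congr
      (.of_forall fun t => by simp only [Pi.mul_apply]; ring))
    (hf'_int.congr (.of_forall fun t => mul_comm _ _))
    (hf_int.congr (.of_forall fun t => mul_comm _ _))
  have hpdf' (t : ℝ) : f t * -((t - μ) / v * gaussianPDFReal μ v t) =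
      -((v : ℝ)⁻¹ * (gaussianPDFReal μ v t * ((t - μ) * f t))) := by ring
  simp only [hpdf', integral_neg, neg_inj, integral_const_mul] at hparts
  simp only [integral_gaussianReal_eq_integral_smul hv, smul_eq_mul]
  rw [inv_mul_eq_iff_eq_mul₀ (by exact_mod_cast hv)] at hparts
  simpa only [mul_comm (f' _)] using hparts

lemma integral_pow_succ_gaussianReal (m : ℕ) :
    ∫ t, t ^ (m + 1) ∂gaussianReal 0 v = v * (m * ∫ t, t ^ (m - 1) ∂gaussianReal 0 v) := by
  have hstein := integral_sub_mul_gaussianReal (μ := 0) (v := v) (hasDerivAt_pow m)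
    (integrable_pow_gaussianReal m) ((integrable_pow_gaussianReal (m - 1)).const_mul _)
    (by simpa only [sub_zero, ← pow_succ'] using integrable_pow_gaussianReal (m + 1))
  simpa only [sub_zero, ← pow_succ', integral_const_mul] using hstein

end OneDimensional

section Algebra

variable {κ R : Type*} [Fintype κ]

lemma dotProduct_self_nonneg [Ring R] [LinearOrder R] [IsOrderedRing R] (x : κ → R) :
    0 ≤ x ⬝ᵥ x :=
  Finset.sum_nonneg fun k _ => mul_self_nonneg (x k)

section CommSemiring

variable [CommSemiring R]

/-- The linear form `ξ ↦ x ⬝ᵥ ξ`, as a polynomial. -/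
noncomputable def linearForm (x : κ → R) : MvPolynomial κ R := ∑ k, x k • X k

/-- The directional derivative of polynomials along `x`. -/
noncomputable def dirDeriv (x : κ → R) : Derivation R (MvPolynomial κ R) (MvPolynomial κ R) :=
  ∑ k, x k • pderiv k

/-- The polynomials annihilated by any `n` successive directional derivatives. In characteristic
zero they are those of total degree less than `n`; the present description is the one on which
integration by parts acts directly. -/
noncomputable def dirDerivKer : ℕ → Submodule R (MvPolynomial κ R)
  | 0 => ⊥
  | n + 1 => ⨅ x : κ → R, (dirDerivKer n).comap (dirDeriv x).toLinearMap

@[simp]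
lemma eval_linearForm (x ξ : κ → R) : eval ξ (linearForm x) = x ⬝ᵥ ξ := by
  simp [linearForm, dotProduct]

lemma dirDeriv_apply (x : κ → R) (p : MvPolynomial κ R) :
    dirDeriv x p = ∑ k, x k • pderiv k p := by
  rw [dirDeriv, ← Derivation.coeFnAddMonoidHom_apply, map_sum, Finset.sum_apply]
  rfl

@[simp]
lemma dirDeriv_linearForm (x y : κ → R) : dirDeriv x (linearForm y) = C (x ⬝ᵥ y) := by
  classical
  simp [dirDeriv_apply, linearForm, dotProduct, pderiv_X, Pi.single_apply, smul_eq_C_mul, mul_comm]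

lemma dirDeriv_prod_linearForm_eq_zero {ι : Type*} {s : Finset ι} {x : κ → R} {y : ι → κ → R}
    (h : ∀ i ∈ s, x ⬝ᵥ y i = 0) : dirDeriv x (∏ i ∈ s, linearForm (y i)) = 0 := by
  classical
  induction s using Finset.induction_on with
  | empty => simp
  | insert i s hi ih =>
    rw [Finset.forall_mem_insert] at h
    simp [Finset.prod_insert hi, h.1, ih h.2]

variable {n : ℕ} {p : MvPolynomial κ R}

lemma mem_dirDerivKer_succ : p ∈ dirDerivKer (n + 1) ↔ ∀ x, dirDeriv x p ∈ dirDerivKer n := by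
  simp [dirDerivKer]

lemma dirDerivKer_le_succ : dirDerivKer (κ := κ) (R := R) n ≤ dirDerivKer (n + 1) := by
  induction n with
  | zero => exact bot_le
  | succ n ih =>
    intro p hp
    rw [mem_dirDerivKer_succ] at hp ⊢
    exact fun x => ih (hp x)

lemma linearForm_mul_mem_dirDerivKer (y : κ → R) (hp : p ∈ dirDerivKer n) :
    linearForm y * p ∈ dirDerivKer (n + 1) := by
  induction n generalizing p with
  | zero => simp [(Submodule.mem_bot R).1 hp]
  | succ n ih =>
    refine mem_dirDerivKer_succ.2 fun x => ?_
    rw [Derivation.leibniz, dirDeriv_linearForm, smul_eq_mul, smul_eq_mul, mul_comm p,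
      ← smul_eq_C_mul]
    exact add_mem (ih (mem_dirDerivKer_succ.1 hp x)) (Submodule.smul_mem _ _ hp)

end CommSemiring

variable [CommRing R]

/-- The creation operator along `x`, adjoint to `dirDeriv x` under the standard Gaussian
expectation. -/
noncomputable def creation (x : κ → R) (p : MvPolynomial κ R) : MvPolynomial κ R :=
  linearForm x * p - dirDeriv x p

/-- The Wick product of the linear forms of a list of vectors. -/
noncomputable def wick (l : List (κ → R)) : MvPolynomial κ R := l.foldr creation 1

lemma dirDeriv_creation_self (x : κ → R) (p : MvPolynomial κ R) :
    dirDeriv x (creation x p) = C (x ⬝ᵥ x) * p + creation x (dirDeriv x p) := by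
  rw [creation, creation, map_sub, Derivation.leibniz, dirDeriv_linearForm, smul_eq_mul,
    smul_eq_mul]
  ring

@[simp]
lemma wick_nil : wick ([] : List (κ → R)) = 1 := rfl

lemma wick_cons (x : κ → R) (l : List (κ → R)) : wick (x :: l) = creation x (wick l) := rfl

lemma wick_mem_dirDerivKer (l : List (κ → R)) : wick l ∈ dirDerivKer (l.length + 1) := by
  induction l with
  | nil => exact mem_dirDerivKer_succ.2 fun x => by simp
  | cons x l ih =>
    have hderiv := mem_dirDerivKer_succ.1 ih x
    exact sub_mem (linearForm_mul_mem_dirDerivKer x ih)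
      (dirDerivKer_le_succ (dirDerivKer_le_succ hderiv))

lemma prod_linearForm_sub_wick_mem_dirDerivKer (l : List (κ → R)) :
    (l.map linearForm).prod - wick l ∈ dirDerivKer l.length := by
  induction l with
  | nil => simp
  | cons x l ih =>
    have hsplit : ((x :: l).map linearForm).prod - wick (x :: l) =
        linearForm x * ((l.map linearForm).prod - wick l) + dirDeriv x (wick l) := by
      rw [List.map_cons, List.prod_cons, wick_cons, creation]
      ring
    rw [hsplit]
    exact add_mem (linearForm_mul_mem_dirDerivKer x ih)
      (dirDerivKer_le_succ (mem_dirDerivKer_succ.1 (wick_mem_dirDerivKer l) x))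

end Algebra

section Expectation

variable {κ : Type*} [Fintype κ]

/-- The standard Gaussian measure on the coordinate space `κ → ℝ`. -/
noncomputable abbrev stdGaussianPi (κ : Type*) [Fintype κ] : Measure (κ → ℝ) :=
  Measure.pi fun _ : κ => gaussianReal 0 1

lemma integrable_eval (p : MvPolynomial κ ℝ) :
    Integrable (fun ξ => eval ξ p) (stdGaussianPi κ) := by
  induction p using MvPolynomial.induction_on' with
  | monomial s a =>
    simp only [eval_monomial, Finsupp.prod_pow]
    exact (Integrable.fintype_prod (f := fun k (t : ℝ) => t ^ s k)
      fun k => integrable_pow_gaussianReal (s k)).const_mul a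
  | add p q hp hq =>
    simp only [map_add]
    exact hp.add hq

/-- The expectation of a polynomial in independent standard Gaussian variables. -/
noncomputable def expectation : MvPolynomial κ ℝ →ₗ[ℝ] ℝ where
  toFun p := ∫ ξ, eval ξ p ∂stdGaussianPi κ
  map_add' p q := by
    simp only [map_add]
    exact integral_add (integrable_eval p) (integrable_eval q)
  map_smul' a p := by
    simp only [smul_eval, RingHom.id_apply, smul_eq_mul]
    exact integral_const_mul _ _

lemma expectation_apply (p : MvPolynomial κ ℝ) :
    expectation p = ∫ ξ, eval ξ p ∂stdGaussianPi κ := rfl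

@[simp]
lemma expectation_one : expectation (1 : MvPolynomial κ ℝ) = 1 := by
  simp [expectation_apply]

lemma expectation_C_mul (a : ℝ) (p : MvPolynomial κ ℝ) :
    expectation (C a * p) = a * expectation p := by
  rw [← smul_eq_C_mul, map_smul, smul_eq_mul]

lemma expectation_sq_nonneg (p : MvPolynomial κ ℝ) : 0 ≤ expectation (p ^ 2) :=
  integral_nonneg fun ξ => by simpa using sq_nonneg (eval ξ p)

lemma expectation_monomial (s : κ →₀ ℕ) (a : ℝ) :
    expectation (monomial s a) = a * ∏ k, ∫ t, t ^ s k ∂gaussianReal 0 1 := by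
  rw [expectation_apply, ← integral_fintype_prod_eq_prod fun k (t : ℝ) => t ^ s k,
    ← integral_const_mul]
  simp only [eval_monomial, Finsupp.prod_pow]

lemma expectation_X_mul (k : κ) (p : MvPolynomial κ ℝ) :
    expectation (X k * p) = expectation (pderiv k p) := by
  classical
  induction p using MvPolynomial.induction_on' with
  | monomial s a =>
    have hne (j : κ) (hj : j ∈ Finset.univ.erase k) :
        ∫ t, t ^ (Finsupp.single k 1 + s : κ →₀ ℕ) j ∂gaussianReal 0 1 =
          ∫ t, t ^ (s - Finsupp.single k 1 : κ →₀ ℕ) j ∂gaussianReal 0 1 := by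
      simp [Finsupp.single_eq_of_ne (Finset.ne_of_mem_erase hj)]
    rw [pderiv_monomial, X, monomial_mul, expectation_monomial, expectation_monomial,
      ← Finset.mul_prod_erase _ _ (Finset.mem_univ k),
      ← Finset.mul_prod_erase _ _ (Finset.mem_univ k), Finset.prod_congr rfl hne]
    simp only [Finsupp.add_apply, Finsupp.tsub_apply, Finsupp.single_eq_same, add_comm 1,
      integral_pow_succ_gaussianReal, NNReal.coe_one]
    ring
  | add p q hp hq => simp only [mul_add, map_add, hp, hq]

lemma expectation_linearForm_mul (x : κ → ℝ) (p : MvPolynomial κ ℝ) :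
    expectation (linearForm x * p) = expectation (dirDeriv x p) := by
  simp only [linearForm, Finset.sum_mul, smul_mul_assoc, map_sum, map_smul, dirDeriv_apply,
    expectation_X_mul]

lemma expectation_creation_mul (x : κ → ℝ) (p q : MvPolynomial κ ℝ) :
    expectation (creation x p * q) = expectation (p * dirDeriv x q) := by
  rw [creation, sub_mul, map_sub, mul_assoc, expectation_linearForm_mul,
    Derivation.leibniz, map_add, smul_eq_mul, smul_eq_mul, mul_comm q, add_sub_cancel_right]

lemma expectation_creation_sq (x : κ → ℝ) (p : MvPolynomial κ ℝ) :
    expectation (creation x p ^ 2) =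
      x ⬝ᵥ x * expectation (p ^ 2) + expectation (dirDeriv x p ^ 2) := by
  calc expectation (creation x p ^ 2)
      = expectation (p * dirDeriv x (creation x p)) := by rw [sq, expectation_creation_mul]
    _ = expectation (C (x ⬝ᵥ x) * p ^ 2 + creation x (dirDeriv x p) * p) := by
      rw [dirDeriv_creation_self]
      ring_nf
    _ = _ := by rw [map_add, expectation_C_mul, expectation_creation_mul, ← sq]

lemma expectation_linearForm_mul_sq {x : κ → ℝ} {p : MvPolynomial κ ℝ} (h : dirDeriv x p = 0) :
    expectation ((linearForm x * p) ^ 2) = x ⬝ᵥ x * expectation (p ^ 2) := by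
  simpa [creation, h] using expectation_creation_sq x p

lemma expectation_linearForm_sq (x : κ → ℝ) : expectation (linearForm x ^ 2) = x ⬝ᵥ x := by
  simpa using expectation_linearForm_mul_sq (x := x) (p := 1) (by simp)

lemma prod_dotProduct_mul_expectation_sq_le (l : List (κ → ℝ)) (p : MvPolynomial κ ℝ) :
    (l.map fun x => x ⬝ᵥ x).prod * expectation (p ^ 2) ≤
      expectation (l.foldr creation p ^ 2) := by
  induction l with
  | nil => simp
  | cons x l ih =>
    rw [List.map_cons, List.prod_cons, List.foldr_cons, expectation_creation_sq, mul_assoc]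
    exact le_add_of_le_of_nonneg (mul_le_mul_of_nonneg_left ih (dotProduct_self_nonneg x))
      (expectation_sq_nonneg _)

lemma expectation_wick_pair_sq (x y : κ → ℝ) :
    expectation (wick [x, y] ^ 2) = x ⬝ᵥ x * y ⬝ᵥ y + (x ⬝ᵥ y) ^ 2 := by
  have hwick : wick [y] = linearForm y := by simp [wick_cons, creation]
  rw [wick_cons, expectation_creation_sq, hwick, dirDeriv_linearForm, expectation_linearForm_sq,
    ← C_pow, ← mul_one (C _), expectation_C_mul, expectation_one, mul_one]

lemma expectation_wick_mul_eq_zero {l : List (κ → ℝ)} {q : MvPolynomial κ ℝ}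
    (hq : q ∈ dirDerivKer l.length) : expectation (wick l * q) = 0 := by
  induction l generalizing q with
  | nil => simp [(Submodule.mem_bot ℝ).1 hq]
  | cons x l ih =>
    rw [wick_cons, expectation_creation_mul]
    exact ih (mem_dirDerivKer_succ.1 hq x)

lemma expectation_wick_sq_le (l : List (κ → ℝ)) :
    expectation (wick l ^ 2) ≤ expectation ((l.map linearForm).prod ^ 2) := by
  set W := wick l
  set P := (l.map linearForm).prod
  have horth : expectation (W * (P - W)) = 0 :=
    expectation_wick_mul_eq_zero (prod_linearForm_sub_wick_mem_dirDerivKer l)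
  calc expectation (W ^ 2)
      ≤ expectation (W ^ 2) + expectation ((P - W) ^ 2) :=
        le_add_of_nonneg_right (expectation_sq_nonneg _)
    _ = expectation (W ^ 2 + (P - W) ^ 2 + (2 : ℝ) • (W * (P - W))) := by simp [horth]
    _ = expectation (P ^ 2) := by
      rw [two_smul]
      ring_nf

end Expectation

section Product

variable {ι κ : Type*} [Fintype κ] (s : Finset ι) (x : ι → κ → ℝ)

lemma prod_dotProduct_mul_expectation_wick_sq_le (l : List (κ → ℝ)) :
    (∏ i ∈ s, x i ⬝ᵥ x i) * expectation (wick l ^ 2) ≤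
      expectation (((∏ i ∈ s, linearForm (x i)) * (l.map linearForm).prod) ^ 2) := by
  have hcreate := prod_dotProduct_mul_expectation_sq_le (s.toList.map x) (wick l)
  have hwick := expectation_wick_sq_le (s.toList.map x ++ l)
  rw [wick, List.foldr_append, ← wick] at hwick
  simpa [Function.comp_def, Finset.prod_map_toList] using hcreate.trans hwick

theorem prod_dotProduct_le_expectation_prod_sq :
    ∏ i ∈ s, x i ⬝ᵥ x i ≤ expectation ((∏ i ∈ s, linearForm (x i)) ^ 2) := by
  simpa using prod_dotProduct_mul_expectation_wick_sq_le s x []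

variable {s x}

lemma expectation_prod_sq_of_pairwise (h : (s : Set ι).Pairwise fun i j => x i ⬝ᵥ x j = 0) :
    expectation ((∏ i ∈ s, linearForm (x i)) ^ 2) = ∏ i ∈ s, x i ⬝ᵥ x i := by
  classical
  induction s using Finset.induction_on with
  | empty => simp
  | insert i s hi ih =>
    have horth : ∀ j ∈ s, x i ⬝ᵥ x j = 0 := fun j hj =>
      h (by simp) (by simp [hj]) (ne_of_mem_of_not_mem hj hi).symm
    rw [Finset.prod_insert hi, Finset.prod_insert hi,
      expectation_linearForm_mul_sq (dirDeriv_prod_linearForm_eq_zero horth),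
      ih (h.mono (by simp))]

lemma pairwise_of_expectation_prod_sq_eq (hx : ∀ i ∈ s, x i ≠ 0)
    (heq : expectation ((∏ i ∈ s, linearForm (x i)) ^ 2) = ∏ i ∈ s, x i ⬝ᵥ x i) :
    (s : Set ι).Pairwise fun i j => x i ⬝ᵥ x j = 0 := by
  classical
  intro i hi j hj hij
  have hpair : {i, j} ⊆ s := Finset.insert_subset hi (Finset.singleton_subset_iff.2 hj)
  have hpos : 0 < ∏ k ∈ s \ {i, j}, x k ⬝ᵥ x k := Finset.prod_pos fun k hk =>
    (dotProduct_self_nonneg _).lt_of_ne' fun h =>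
      hx k (Finset.mem_sdiff.1 hk).1 (dotProduct_self_eq_zero.1 h)
  have hbound := prod_dotProduct_mul_expectation_wick_sq_le (s \ {i, j}) x [x i, x j]
  rw [← Finset.prod_sdiff hpair, ← Finset.prod_sdiff hpair, Finset.prod_pair hij,
    Finset.prod_pair hij] at heq
  rw [List.map_cons, List.map_singleton, List.prod_pair, heq, expectation_wick_pair_sq] at hbound
  have hle : (x i ⬝ᵥ x j) ^ 2 ≤ 0 :=
    (add_le_iff_nonpos_right _).1 (le_of_mul_le_mul_left hbound hpos)
  exact pow_eq_zero_iff two_ne_zero |>.1 (hle.antisymm (sq_nonneg _))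

theorem expectation_prod_sq_eq_iff :
    expectation ((∏ i ∈ s, linearForm (x i)) ^ 2) = ∏ i ∈ s, x i ⬝ᵥ x i ↔
      (s : Set ι).Pairwise (fun i j => x i ⬝ᵥ x j = 0) ∨ ∃ i ∈ s, x i = 0 := by
  refine ⟨fun heq => ?_, ?_⟩
  · by_cases! hzero : ∃ i ∈ s, x i = 0
    · exact .inr hzero
    · exact .inl (pairwise_of_expectation_prod_sq_eq hzero heq)
  · rintro (horth | ⟨i, hi, hxi⟩)
    · exact expectation_prod_sq_of_pairwise horth
    · rw [Finset.prod_eq_zero hi (by simp [linearForm, hxi] : linearForm (x i) = 0),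
        Finset.prod_eq_zero hi (by simp [hxi])]
      simp

lemma integral_prod_sq_eq_expectation :
    ∫ ξ, ∏ i ∈ s, (∑ k, x i k * ξ k) ^ 2 ∂stdGaussianPi κ =
      expectation ((∏ i ∈ s, linearForm (x i)) ^ 2) := by
  simp [expectation_apply, map_prod, Finset.prod_pow, dotProduct]

end Product

end GaussianWick

open GaussianWick in
theorem gaussian_prod_squares_ge_general {ι κ : Type*} [Fintype ι] [Fintype κ] (x : ι → κ → ℝ) :
    (∏ i, ∫ ξ : κ → ℝ, (∑ k, x i k * ξ k) ^ 2
        ∂(Measure.pi fun _ : κ => ProbabilityTheory.gaussianReal 0 1))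
      ≤ ∫ ξ : κ → ℝ, ∏ i, (∑ k, x i k * ξ k) ^ 2
          ∂(Measure.pi fun _ : κ => ProbabilityTheory.gaussianReal 0 1) ∧
    (∏ i, ∫ ξ : κ → ℝ, (∑ k, x i k * ξ k) ^ 2
        ∂(Measure.pi fun _ : κ => ProbabilityTheory.gaussianReal 0 1))
      = ∏ i, ∑ k, (x i k) ^ 2 ∧
    ((∫ ξ : κ → ℝ, ∏ i, (∑ k, x i k * ξ k) ^ 2
          ∂(Measure.pi fun _ : κ => ProbabilityTheory.gaussianReal 0 1))
        = ∏ i, ∑ k, (x i k) ^ 2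
      ↔ (∀ i j, i ≠ j → ∑ k, x i k * x j k = 0) ∨ ∃ i, x i = 0) := by
  have hnorm (i : ι) : ∑ k, x i k ^ 2 = x i ⬝ᵥ x i := by simp only [dotProduct, sq]
  have hsq (i : ι) : ∫ ξ, (∑ k, x i k * ξ k) ^ 2 ∂stdGaussianPi κ = x i ⬝ᵥ x i := by
    simpa [expectation_linearForm_sq] using integral_prod_sq_eq_expectation (s := {i}) (x := x)
  simp only [hsq, hnorm, integral_prod_sq_eq_expectation]
  refine ⟨prod_dotProduct_le_expectation_prod_sq _ x, trivial, expectation_prod_sq_eq_iff.trans ?_⟩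
  simp [Set.Pairwise, dotProduct]

/-- For `x₁, …, xₙ ∈ ℝ^d` and a standard Gaussian random vector `ξ` on `ℝ^d`, one has
`E ∏ᵢ (xᵢ, ξ)² ≥ ∏ᵢ E (xᵢ, ξ)² = ∏ᵢ |xᵢ|²`, with equality if and only if the `xᵢ` are
pairwise orthogonal or at least one of them is zero. -/
theorem gaussian_prod_squares_ge (d n : ℕ) (x : Fin n → Fin d → ℝ) :
    (∏ i, ∫ ξ : Fin d → ℝ, (∑ k, x i k * ξ k) ^ 2
        ∂(Measure.pi fun _ : Fin d => ProbabilityTheory.gaussianReal 0 1))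
      ≤ ∫ ξ : Fin d → ℝ, ∏ i, (∑ k, x i k * ξ k) ^ 2
          ∂(Measure.pi fun _ : Fin d => ProbabilityTheory.gaussianReal 0 1) ∧
    (∏ i, ∫ ξ : Fin d → ℝ, (∑ k, x i k * ξ k) ^ 2
        ∂(Measure.pi fun _ : Fin d => ProbabilityTheory.gaussianReal 0 1))
      = ∏ i, ∑ k, (x i k) ^ 2 ∧
    ((∫ ξ : Fin d → ℝ, ∏ i, (∑ k, x i k * ξ k) ^ 2
          ∂(Measure.pi fun _ : Fin d => ProbabilityTheory.gaussianReal 0 1))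
        = ∏ i, ∑ k, (x i k) ^ 2
      ↔ (∀ i j, i ≠ j → ∑ k, x i k * x j k = 0) ∨ ∃ i, x i = 0) :=
  gaussian_prod_squares_ge_general x
end

section
/- Let x_1, ..., x_n be unit vectors in ℝ^d (with d ≥ 1). Then the average of the function ξ ↦ ∏_{i=1}^n (x_i, ξ)² over the unit sphere {ξ ∈ ℝ^d : |ξ| = 1} (with respect to the normalized uniform/rotation-invariant measure on the sphere) is at least Γ(d/2) / (2^n Γ(d/2 + n)) = 1/(d(d+2)(d+4)⋯(d+2n−2)), with equality if and only if the vectors x_1, ..., x_n are pairwise orthogonal. -/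
open MeasureTheory BigOperators
open scoped RealInnerProductSpace

/-- The uniform (rotation-invariant) probability measure on the unit sphere of `ℝ^d`:
the normalization of the canonical sphere measure obtained from Lebesgue measure. -/
noncomputable def sphereUniform (d : ℕ) :
    Measure (Metric.sphere (0 : EuclideanSpace ℝ (Fin d)) 1) :=
  ((volume : Measure (EuclideanSpace ℝ (Fin d))).toSphere Set.univ)⁻¹ •
    (volume : Measure (EuclideanSpace ℝ (Fin d))).toSphere

/-!
In polar coordinates, the average of a homogeneous polynomial of even degree over the sphere is a
constant multiple of its Gaussian expectation `E`. So for `P = ∏ i, ⟪x i, ·⟫` one has to show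
`1 ≤ E (P * P)`, with equality exactly when the `x i` are pairwise orthogonal.

Euler's identity and Gaussian integration by parts give, for `P` homogeneous of degree `n`,
`n * E (P * P) = E (P * ΔP) + ∑ i, E (∂ᵢP * ∂ᵢP)`, and `E (P * ΔP) ≥ 0` by a similar recursion.
The Fischer form satisfies the same recursion without the Laplacian term,
`n * ⟨P, P⟩ = ∑ i, ⟨∂ᵢP, ∂ᵢP⟩`, whence `⟨P, P⟩ ≤ E (P * P)` by induction on the degree.

Finally, if `ℓ` is the linear form of a unit vector `v`, then
`⟨ℓ * P, ℓ * P⟩ = ⟨P, P⟩ + ⟨∂ᵥP, ∂ᵥP⟩`. Hence `1 ≤ ⟨P, P⟩` for a product of such forms, and equality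
makes the derivative of each partial product in the direction of the next vector vanish, which
forces that vector to be orthogonal to the previous ones.
-/

namespace SphereAverage

open MvPolynomial ProbabilityTheory
open scoped Nat Matrix NNReal

section FischerForm

variable {σ R : Type*} [CommSemiring R]

/-- The Fischer form `⟨p, q⟩ = ∑ m, m! * pₘ * qₘ` on polynomials, where `m! = ∏ i, (m i)!`.
It is the form for which multiplication by `X i` is adjoint to `∂ᵢ`. -/
noncomputable def fischerForm (σ R : Type*) [CommSemiring R] :
    MvPolynomial σ R →ₗ[R] MvPolynomial σ R →ₗ[R] R :=
  (basisMonomials σ R).constr R fun m => (m.prod fun _ k => (k ! : R)) • lcoeff R m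

lemma fischerForm_monomial (m : σ →₀ ℕ) (a : R) (q : MvPolynomial σ R) :
    fischerForm σ R (monomial m a) q = a * (m.prod fun _ k => (k ! : R)) * coeff m q := by
  have hm : monomial m a = a • basisMonomials σ R m := by simp [smul_monomial]
  rw [fischerForm, hm, map_smul, Module.Basis.constr_basis]
  simp [mul_assoc]

lemma fischerForm_apply (p q : MvPolynomial σ R) :
    fischerForm σ R p q =
      ∑ m ∈ p.support, coeff m p * (m.prod fun _ k => (k ! : R)) * coeff m q := by
  conv_lhs => rw [p.as_sum, map_sum, LinearMap.sum_apply]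
  exact Finset.sum_congr rfl fun m _ => fischerForm_monomial m _ q

lemma fischerForm_self_eq_sum (p : MvPolynomial σ R) :
    fischerForm σ R p p = ∑ m ∈ p.support, (m.prod fun _ k => (k ! : R)) * coeff m p ^ 2 := by
  rw [fischerForm_apply]
  exact Finset.sum_congr rfl fun m _ => by ring

lemma fischerForm_C_C (a b : R) : fischerForm σ R (C a) (C b) = a * b := by
  rw [C_apply, fischerForm_monomial]
  simp

lemma fischerForm_comm (p q : MvPolynomial σ R) :
    fischerForm σ R p q = fischerForm σ R q p := by
  induction p using MvPolynomial.induction_on' with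
  | add p₁ p₂ h₁ h₂ => simp [h₁, h₂]
  | monomial m a =>
    induction q using MvPolynomial.induction_on' with
    | add q₁ q₂ h₁ h₂ => simp [h₁, h₂]
    | monomial n b =>
      classical
      rw [fischerForm_monomial, fischerForm_monomial, coeff_monomial, coeff_monomial]
      obtain rfl | hmn := eq_or_ne m n
      · simp only [if_true]
        ring
      · simp [hmn, hmn.symm]

lemma prod_factorial_add_single (m : σ →₀ ℕ) (i : σ) :
    ((m + Finsupp.single i 1).prod fun _ k => (k ! : R)) =
      (m i + 1) * m.prod fun _ k => (k ! : R) := by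
  have h (n : σ →₀ ℕ) := Finsupp.mul_prod_erase' n i (fun _ k => (k ! : R)) (by simp)
  rw [← h, ← h m, Finsupp.erase_add, Finsupp.erase_single, add_zero]
  simp [Nat.factorial_succ, mul_assoc]

lemma fischerForm_X_mul (i : σ) (p q : MvPolynomial σ R) :
    fischerForm σ R (X i * p) q = fischerForm σ R p (pderiv i q) := by
  induction p using MvPolynomial.induction_on' with
  | add p₁ p₂ h₁ h₂ => simp [mul_add, h₁, h₂]
  | monomial m a =>
    rw [X, monomial_mul, one_mul, add_comm, fischerForm_monomial, fischerForm_monomial,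
      prod_factorial_add_single, coeff_pderiv]
    ring

variable [Fintype σ]

/-- The linear form `x ↦ v ⬝ᵥ x` as a polynomial; products of these are the polynomials whose
squares are averaged over the sphere. -/
noncomputable def linearForm (v : σ → R) : MvPolynomial σ R := ∑ i, v i • X i

/-- The derivative of polynomials in the direction `v`, adjoint to multiplication by `linearForm v`
for the Fischer form. -/
noncomputable def dirDeriv (v : σ → R) :
    Derivation R (MvPolynomial σ R) (MvPolynomial σ R) :=
  mkDerivation R fun i => C (v i)

lemma isHomogeneous_linearForm (v : σ → R) : (linearForm v).IsHomogeneous 1 :=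
  IsHomogeneous.sum _ _ _ fun i _ => by
    simpa only [smul_eq_C_mul] using isHomogeneous_C_mul_X (v i) i

lemma isHomogeneous_prod_linearForm {ι : Type*} (s : Finset ι) (v : ι → σ → R) :
    (∏ i ∈ s, linearForm (v i)).IsHomogeneous s.card := by
  simpa using IsHomogeneous.prod s (fun i => linearForm (v i)) (fun _ => 1) fun i _ =>
    isHomogeneous_linearForm (v i)

lemma eval_linearForm (v x : σ → R) : eval x (linearForm v) = v ⬝ᵥ x := by
  simp [linearForm, dotProduct]

lemma dirDeriv_linearForm (v w : σ → R) : dirDeriv v (linearForm w) = C (v ⬝ᵥ w) := by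
  simp [dirDeriv, linearForm, dotProduct, smul_eq_C_mul, mul_comm]

lemma dirDeriv_apply (v : σ → R) (p : MvPolynomial σ R) :
    dirDeriv v p = ∑ i, v i • pderiv i p := by
  classical
  have h : dirDeriv v p = Derivation.coeFnAddMonoidHom (∑ i, v i • pderiv i) p := by
    refine DFunLike.congr_fun (derivation_ext fun j => ?_) p
    change _ = Derivation.coeFnAddMonoidHom _ _
    rw [map_sum]
    simp [dirDeriv, pderiv_X, Pi.single_apply, smul_eq_C_mul]
  rw [h, map_sum]
  simp

lemma dirDeriv_prod_linearForm_eq_zero {ι : Type*} {s : Finset ι} {v : σ → R} {w : ι → σ → R}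
    (h : ∀ i ∈ s, v ⬝ᵥ w i = 0) : dirDeriv v (∏ i ∈ s, linearForm (w i)) = 0 := by
  induction s using Finset.cons_induction with
  | empty => simp
  | cons i s _ ih =>
    rw [Finset.forall_mem_cons] at h
    simp [Finset.prod_cons, Derivation.leibniz, dirDeriv_linearForm, h.1, ih h.2]

lemma fischerForm_linearForm_mul (v : σ → R) (p q : MvPolynomial σ R) :
    fischerForm σ R (linearForm v * p) q = fischerForm σ R p (dirDeriv v q) := by
  simp [linearForm, dirDeriv_apply, Finset.sum_mul, fischerForm_X_mul]

lemma fischerForm_linearForm_mul_linearForm_mul (v w : σ → R) (p q : MvPolynomial σ R) :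
    fischerForm σ R (linearForm v * p) (linearForm w * q) =
      v ⬝ᵥ w * fischerForm σ R p q + fischerForm σ R (dirDeriv w p) (dirDeriv v q) := by
  rw [fischerForm_linearForm_mul, Derivation.leibniz, dirDeriv_linearForm, map_add, add_comm]
  congr 1
  · rw [smul_eq_mul, mul_comm, ← smul_eq_C_mul, map_smul, smul_eq_mul]
  · rw [smul_eq_mul, fischerForm_comm, fischerForm_linearForm_mul, fischerForm_comm]

lemma natCast_mul_fischerForm {n : ℕ} {p : MvPolynomial σ R} (hp : p.IsHomogeneous n)
    (q : MvPolynomial σ R) :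
    n * fischerForm σ R p q = ∑ i, fischerForm σ R (pderiv i p) (pderiv i q) := by
  simp_rw [← fischerForm_X_mul, ← LinearMap.sum_apply, ← map_sum, hp.sum_X_mul_pderiv, map_nsmul,
    LinearMap.smul_apply, nsmul_eq_mul]

end FischerForm

section Ordered

variable {σ R : Type*} [CommRing R] [LinearOrder R] [IsStrictOrderedRing R]

lemma prod_factorial_pos (m : σ →₀ ℕ) : 0 < m.prod fun _ k => (k ! : R) :=
  Finset.prod_pos fun _ _ => Nat.cast_pos.mpr (Nat.factorial_pos _)

lemma fischerForm_self_nonneg (p : MvPolynomial σ R) : 0 ≤ fischerForm σ R p p := by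
  rw [fischerForm_self_eq_sum]
  exact Finset.sum_nonneg fun m _ => mul_nonneg (prod_factorial_pos m).le (sq_nonneg _)

lemma fischerForm_self_eq_zero {p : MvPolynomial σ R} : fischerForm σ R p p = 0 ↔ p = 0 := by
  refine ⟨fun h => ?_, fun h => by simp [h]⟩
  rw [fischerForm_self_eq_sum, Finset.sum_eq_zero_iff_of_nonneg fun m _ =>
    mul_nonneg (prod_factorial_pos m).le (sq_nonneg _)] at h
  rw [← support_eq_empty, Finset.eq_empty_iff_forall_notMem]
  intro m hm
  exact mul_ne_zero (prod_factorial_pos m).ne' (pow_ne_zero 2 (mem_support_iff.mp hm)) (h m hm)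

variable [Fintype σ] {ι : Type*}

lemma one_le_fischerForm_prod_linearForm (s : Finset ι) {v : ι → σ → R}
    (hv : ∀ i, v i ⬝ᵥ v i = 1) :
    1 ≤ fischerForm σ R (∏ i ∈ s, linearForm (v i)) (∏ i ∈ s, linearForm (v i)) := by
  induction s using Finset.cons_induction with
  | empty => simp [← C_1, fischerForm_C_C, -map_one]
  | cons i s _ ih =>
    rw [Finset.prod_cons, fischerForm_linearForm_mul_linearForm_mul, hv, one_mul]
    exact le_add_of_le_of_nonneg ih (fischerForm_self_nonneg _)

lemma dotProduct_eq_zero_of_dirDeriv_prod_linearForm_eq_zero {s : Finset ι} {v : ι → σ → R}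
    (hv : ∀ i, v i ⬝ᵥ v i = 1) (horth : (s : Set ι).Pairwise fun i j => v i ⬝ᵥ v j = 0)
    {w : σ → R} (hw : dirDeriv w (∏ i ∈ s, linearForm (v i)) = 0) {j : ι} (hj : j ∈ s) :
    w ⬝ᵥ v j = 0 := by
  classical
  set Q := ∏ i ∈ s.erase j, linearForm (v i)
  have hQ : dirDeriv (v j) Q = 0 := dirDeriv_prod_linearForm_eq_zero fun i hi =>
    horth hj (Finset.mem_of_mem_erase hi) (Finset.ne_of_mem_erase hi).symm
  -- As `∂_j Q = 0`, the left side is `⟨ℓ_w * Q, ℓ_j * Q⟩ = ⟨Q, ∂_w (ℓ_j * Q)⟩ = 0`.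
  have hpair : w ⬝ᵥ v j * fischerForm σ R Q Q = 0 := by
    have := fischerForm_linearForm_mul_linearForm_mul w (v j) Q Q
    rw [Finset.mul_prod_erase s (fun i => linearForm (v i)) hj, fischerForm_linearForm_mul, hw,
      hQ] at this
    simpa using this.symm
  exact (mul_eq_zero.mp hpair).resolve_right
    (zero_lt_one.trans_le (one_le_fischerForm_prod_linearForm _ hv)).ne'

lemma pairwise_dotProduct_eq_zero_of_fischerForm_prod_linearForm_eq_one {s : Finset ι}
    {v : ι → σ → R} (hv : ∀ i, v i ⬝ᵥ v i = 1)
    (h : fischerForm σ R (∏ i ∈ s, linearForm (v i)) (∏ i ∈ s, linearForm (v i)) = 1) :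
    (s : Set ι).Pairwise fun i j => v i ⬝ᵥ v j = 0 := by
  induction s using Finset.cons_induction with
  | empty => simp
  | cons i s _ ih =>
    rw [Finset.prod_cons, fischerForm_linearForm_mul_linearForm_mul, hv, one_mul] at h
    have hle := one_le_fischerForm_prod_linearForm s hv
    have hnonneg := fischerForm_self_nonneg (dirDeriv (v i) (∏ i ∈ s, linearForm (v i)))
    have horth := ih (by linarith)
    have hderiv := fischerForm_self_eq_zero.mp (le_antisymm (by linarith) hnonneg)
    rw [Finset.coe_cons]
    refine horth.insert fun j hj _ => ?_
    have hij := dotProduct_eq_zero_of_dirDeriv_prod_linearForm_eq_zero hv horth hderiv hj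
    exact ⟨hij, dotProduct_comm (v i) (v j) ▸ hij⟩

end Ordered

section Gaussian

lemma hasDerivAt_gaussianPDFReal (μ : ℝ) (v : ℝ≥0) (t : ℝ) :
    HasDerivAt (gaussianPDFReal μ v) (-((t - μ) / v) * gaussianPDFReal μ v t) t := by
  have hexp := ((((hasDerivAt_id' t).sub_const μ).fun_pow 2).fun_neg.div_const (2 * v : ℝ)).exp
  rw [gaussianPDFReal_def]
  exact (hexp.const_mul (√(2 * Real.pi * v))⁻¹).congr_deriv (by ring)

lemma integrable_pow_mul_gaussianPDFReal (μ : ℝ) (v : ℝ≥0) (k : ℕ) :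
    Integrable fun t => t ^ k * gaussianPDFReal μ v t := by
  obtain rfl | hv := eq_or_ne v 0
  · simp
  have h : Integrable (fun t : ℝ => t ^ k) (gaussianReal μ v) := by
    have := (memLp_id_gaussianReal' (μ := μ) (v := v) k (by finiteness)).integrable_norm_pow'
    exact (integrable_norm_iff (by fun_prop)).mp (by simpa using this)
  rw [gaussianReal_of_var_ne_zero μ hv, integrable_withDensity_iff_integrable_smul'
    (measurable_gaussianPDF μ v) (.of_forall fun _ => gaussianPDF_lt_top)] at h
  simpa [mul_comm] using h

lemma integral_pow_succ_mul_gaussianPDFReal (v : ℝ≥0) (k : ℕ) :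
    ∫ t, t ^ (k + 1) * gaussianPDFReal 0 v t =
      v * (k * ∫ t, t ^ (k - 1) * gaussianPDFReal 0 v t) := by
  obtain rfl | hv := eq_or_ne v 0
  · simp
  have hint := integrable_pow_mul_gaussianPDFReal 0 v
  have hderiv (t : ℝ) : HasDerivAt (fun t => t ^ k * gaussianPDFReal 0 v t)
      (k * (t ^ (k - 1) * gaussianPDFReal 0 v t) - (t ^ (k + 1) * gaussianPDFReal 0 v t) / v)
      t :=
    ((hasDerivAt_pow k t).fun_mul (hasDerivAt_gaussianPDFReal 0 v t)).congr_deriv (by ring)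
  have h := integral_eq_zero_of_hasDerivAt_of_integrable hderiv
    (((hint _).const_mul _).sub ((hint _).div_const _)) (hint k)
  rw [integral_sub ((hint _).const_mul _) ((hint _).div_const _), integral_const_mul,
    integral_div, sub_eq_zero, eq_div_iff (by exact_mod_cast hv)] at h
  rw [← h, mul_comm]

variable {σ : Type*} [Fintype σ]

lemma eval_monomial_mul_prod_gaussianPDFReal (m : σ →₀ ℕ) (c : ℝ) (x : σ → ℝ) :
    eval x (monomial m c) * ∏ i, gaussianPDFReal 0 1 (x i) =
      c * ∏ i, (x i ^ m i * gaussianPDFReal 0 1 (x i)) := by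
  rw [eval_monomial, Finsupp.prod_fintype _ _ (by simp), Finset.prod_mul_distrib, mul_assoc]

lemma integrable_eval_mul_prod_gaussianPDFReal (p : MvPolynomial σ ℝ) :
    Integrable fun x => eval x p * ∏ i, gaussianPDFReal 0 1 (x i) := by
  induction p using MvPolynomial.induction_on' with
  | monomial m c =>
    simp only [eval_monomial_mul_prod_gaussianPDFReal]
    exact (Integrable.fintype_prod (f := fun i t => t ^ m i * gaussianPDFReal 0 1 t)
      fun i => integrable_pow_mul_gaussianPDFReal 0 1 (m i)).const_mul c
  | add p q hp hq =>
    simp only [map_add, add_mul]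
    exact hp.add hq

/-- The expectation of a polynomial in independent standard Gaussian variables indexed by `σ`,
written as an integral against the product density with respect to Lebesgue measure, the form in
which polar coordinates apply. -/
noncomputable def gaussianExpectation (σ : Type*) [Fintype σ] : MvPolynomial σ ℝ →ₗ[ℝ] ℝ where
  toFun p := ∫ x, eval x p * ∏ i, gaussianPDFReal 0 1 (x i)
  map_add' p q := by
    simp only [map_add, add_mul]
    exact integral_add (integrable_eval_mul_prod_gaussianPDFReal p)
      (integrable_eval_mul_prod_gaussianPDFReal q)
  map_smul' c p := by
    simp only [smul_eval, mul_assoc, integral_const_mul, smul_eq_mul, RingHom.id_apply]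

lemma gaussianExpectation_apply (p : MvPolynomial σ ℝ) :
    gaussianExpectation σ p = ∫ x, eval x p * ∏ i, gaussianPDFReal 0 1 (x i) := rfl

lemma gaussianExpectation_monomial (m : σ →₀ ℕ) (c : ℝ) :
    gaussianExpectation σ (monomial m c) = c * ∏ i, ∫ t, t ^ m i * gaussianPDFReal 0 1 t := by
  simp only [gaussianExpectation_apply, eval_monomial_mul_prod_gaussianPDFReal]
  rw [integral_const_mul,
    integral_fintype_prod_volume_eq_prod fun i t => t ^ m i * gaussianPDFReal 0 1 t]

lemma gaussianExpectation_C (c : ℝ) : gaussianExpectation σ (C c) = c := by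
  rw [C_apply, gaussianExpectation_monomial]
  simp [integral_gaussianPDFReal_eq_one 0 one_ne_zero]

lemma gaussianExpectation_mul_self_nonneg (p : MvPolynomial σ ℝ) :
    0 ≤ gaussianExpectation σ (p * p) := by
  refine integral_nonneg fun x => ?_
  rw [map_mul]
  exact mul_nonneg (mul_self_nonneg _)
    (Finset.prod_nonneg fun i _ => gaussianPDFReal_nonneg 0 1 (x i))

-- Stein's identity, i.e. Gaussian integration by parts.
lemma gaussianExpectation_X_mul (i : σ) (p : MvPolynomial σ ℝ) :
    gaussianExpectation σ (X i * p) = gaussianExpectation σ (pderiv i p) := by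
  classical
  induction p using MvPolynomial.induction_on' with
  | add p q hp hq => simp only [mul_add, map_add, hp, hq]
  | monomial m c =>
    rw [pderiv_monomial, X, monomial_mul, one_mul, gaussianExpectation_monomial,
      gaussianExpectation_monomial, mul_assoc, Fintype.prod_eq_mul_prod_compl i,
      Fintype.prod_eq_mul_prod_compl i, ← mul_assoc (m i : ℝ)]
    congr 2
    · simp [add_comm 1, integral_pow_succ_mul_gaussianPDFReal]
    · refine Finset.prod_congr rfl fun j hj => ?_
      have hji : j ≠ i := by simpa using hj
      simp [hji]

end Gaussian

section Laplacian

variable {σ R : Type*} [CommSemiring R]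

lemma pderiv_pderiv_comm (i j : σ) (p : MvPolynomial σ R) :
    pderiv i (pderiv j p) = pderiv j (pderiv i p) := by
  obtain rfl | hij := eq_or_ne i j
  · rfl
  · ext m
    simp [coeff_pderiv, hij, hij.symm, add_right_comm, mul_right_comm]

variable [Fintype σ]

/-- The Laplace operator `∑ i, ∂ᵢ²` on polynomials, by which Gaussian expectation departs from the
Fischer form. -/
noncomputable def laplacian (p : MvPolynomial σ R) : MvPolynomial σ R :=
  ∑ i, pderiv i (pderiv i p)

lemma pderiv_laplacian (i : σ) (p : MvPolynomial σ R) :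
    pderiv i (laplacian p) = laplacian (pderiv i p) := by
  simp only [laplacian, map_sum, pderiv_pderiv_comm i]

end Laplacian

section GaussianFischer

variable {σ : Type*} [Fintype σ]

lemma natCast_mul_gaussianExpectation {n : ℕ} {p : MvPolynomial σ ℝ} (hp : p.IsHomogeneous n)
    (q : MvPolynomial σ ℝ) :
    n * gaussianExpectation σ (p * q) = gaussianExpectation σ (q * laplacian p) +
      ∑ i, gaussianExpectation σ (pderiv i p * pderiv i q) := by
  have heuler : (n : MvPolynomial σ ℝ) * p = ∑ i, X i * pderiv i p := by
    rw [hp.sum_X_mul_pderiv, nsmul_eq_mul]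
  calc n * gaussianExpectation σ (p * q)
      = ∑ i, gaussianExpectation σ (X i * (pderiv i p * q)) := by
        simp_rw [← nsmul_eq_mul, ← map_nsmul, nsmul_eq_mul, ← mul_assoc, heuler, Finset.sum_mul,
          map_sum]
    _ = _ := by
        simp_rw [gaussianExpectation_X_mul, Derivation.leibniz, map_add, smul_eq_mul, laplacian,
          Finset.mul_sum, map_sum, Finset.sum_add_distrib, add_comm]

lemma gaussianExpectation_mul_laplacian_nonneg {n : ℕ} {p : MvPolynomial σ ℝ}
    (hp : p.IsHomogeneous n) : 0 ≤ gaussianExpectation σ (p * laplacian p) := by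
  induction n generalizing p with
  | zero =>
    rw [totalDegree_eq_zero_iff_eq_C.mp ((totalDegree_zero_iff_isHomogeneous σ).mpr hp)]
    simp [laplacian]
  | succ n ih =>
    have hgrad : 0 ≤ ∑ i, gaussianExpectation σ (pderiv i p * pderiv i (laplacian p)) :=
      Finset.sum_nonneg fun i _ => pderiv_laplacian i p ▸ ih hp.pderiv
    have hlap := gaussianExpectation_mul_self_nonneg (laplacian p)
    refine nonneg_of_mul_nonneg_right ?_ (Nat.cast_pos (α := ℝ).mpr n.succ_pos)
    rw [natCast_mul_gaussianExpectation hp]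
    exact add_nonneg hlap hgrad

lemma fischerForm_self_le_gaussianExpectation {n : ℕ} {p : MvPolynomial σ ℝ}
    (hp : p.IsHomogeneous n) : fischerForm σ ℝ p p ≤ gaussianExpectation σ (p * p) := by
  induction n generalizing p with
  | zero =>
    rw [totalDegree_eq_zero_iff_eq_C.mp ((totalDegree_zero_iff_isHomogeneous σ).mpr hp),
      fischerForm_C_C, ← C_mul, gaussianExpectation_C]
  | succ n ih =>
    refine le_of_mul_le_mul_left ?_ (Nat.cast_pos (α := ℝ).mpr n.succ_pos)
    rw [natCast_mul_fischerForm hp, natCast_mul_gaussianExpectation hp]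
    exact le_add_of_nonneg_of_le (gaussianExpectation_mul_laplacian_nonneg hp)
      (Finset.sum_le_sum fun i _ => ih hp.pderiv)

lemma gaussianExpectation_linearForm_mul (v : σ → ℝ) (p : MvPolynomial σ ℝ) :
    gaussianExpectation σ (linearForm v * p) = gaussianExpectation σ (dirDeriv v p) := by
  simp [linearForm, dirDeriv_apply, Finset.sum_mul, gaussianExpectation_X_mul]

variable {ι : Type*}

lemma gaussianExpectation_prod_linearForm_mul_self {s : Finset ι} {v : ι → σ → ℝ}
    (hv : ∀ i, v i ⬝ᵥ v i = 1) (horth : (s : Set ι).Pairwise fun i j => v i ⬝ᵥ v j = 0) :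
    gaussianExpectation σ ((∏ i ∈ s, linearForm (v i)) * ∏ i ∈ s, linearForm (v i)) = 1 := by
  induction s using Finset.cons_induction with
  | empty => simpa using gaussianExpectation_C (σ := σ) 1
  | cons i s hi ih =>
    rw [Finset.coe_cons] at horth
    have hderiv : dirDeriv (v i) (∏ j ∈ s, linearForm (v j)) = 0 :=
      dirDeriv_prod_linearForm_eq_zero fun j hj =>
        horth (Set.mem_insert _ _) (Set.mem_insert_of_mem _ hj) (ne_of_mem_of_not_mem hj hi).symm
    have hleibniz : dirDeriv (v i) ((∏ j ∈ s, linearForm (v j)) *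
          (linearForm (v i) * ∏ j ∈ s, linearForm (v j))) =
        (∏ j ∈ s, linearForm (v j)) * ∏ j ∈ s, linearForm (v j) := by
      simp [Derivation.leibniz, hderiv, dirDeriv_linearForm, hv]
    rw [Finset.prod_cons, mul_assoc, gaussianExpectation_linearForm_mul, hleibniz]
    exact ih (horth.mono (Set.subset_insert _ _))

theorem one_le_gaussianExpectation_prod_linearForm_mul_self (s : Finset ι) {v : ι → σ → ℝ}
    (hv : ∀ i, v i ⬝ᵥ v i = 1) :
    1 ≤ gaussianExpectation σ ((∏ i ∈ s, linearForm (v i)) * ∏ i ∈ s, linearForm (v i)) :=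
  (one_le_fischerForm_prod_linearForm s hv).trans
    (fischerForm_self_le_gaussianExpectation (isHomogeneous_prod_linearForm s v))

theorem gaussianExpectation_prod_linearForm_mul_self_eq_one_iff {s : Finset ι} {v : ι → σ → ℝ}
    (hv : ∀ i, v i ⬝ᵥ v i = 1) :
    gaussianExpectation σ ((∏ i ∈ s, linearForm (v i)) * ∏ i ∈ s, linearForm (v i)) = 1 ↔
      (s : Set ι).Pairwise fun i j => v i ⬝ᵥ v j = 0 := by
  refine ⟨fun h => ?_, gaussianExpectation_prod_linearForm_mul_self hv⟩
  refine pairwise_dotProduct_eq_zero_of_fischerForm_prod_linearForm_eq_one hv (le_antisymm ?_ ?_)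
  · exact h ▸ fischerForm_self_le_gaussianExpectation (isHomogeneous_prod_linearForm s v)
  · exact one_le_fischerForm_prod_linearForm s hv

end GaussianFischer

section Polar

lemma integral_volumeIoiPow (n : ℕ) (g : ℝ → ℝ) :
    ∫ r : Set.Ioi (0 : ℝ), g r ∂Measure.volumeIoiPow n = ∫ r in Set.Ioi 0, r ^ n * g r := by
  simp only [Measure.volumeIoiPow, ENNReal.ofReal]
  rw [integral_withDensity_eq_integral_smul (by fun_prop),
    integral_subtype_comap measurableSet_Ioi fun r : ℝ => (r ^ n).toNNReal • g r]
  refine setIntegral_congr_fun measurableSet_Ioi fun r hr => ?_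
  simp only [NNReal.smul_def, Real.coe_toNNReal _ (pow_nonneg (Set.mem_Ioi.mp hr).le n),
    smul_eq_mul]

variable {E : Type*} [NormedAddCommGroup E] [NormedSpace ℝ E] [FiniteDimensional ℝ E]
  [Nontrivial E] [MeasurableSpace E] [BorelSpace E] (μ : Measure E) [μ.IsAddHaarMeasure]

lemma integral_homogeneous_mul_fun_norm {m : ℕ} {f : E → ℝ}
    (hf : ∀ r > 0, ∀ x, f (r • x) = r ^ m * f x) (g : ℝ → ℝ) :
    ∫ x, f x * g ‖x‖ ∂μ = (∫ ξ : Metric.sphere (0 : E) 1, f ξ ∂μ.toSphere) *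
      ∫ r in Set.Ioi 0, r ^ (Module.finrank ℝ E - 1 + m) * g r := by
  have hpolar (x : ({0}ᶜ : Set E)) : f x * g ‖(x : E)‖ =
      f (homeomorphUnitSphereProd E x).1 * ((homeomorphUnitSphereProd E x).2 ^ m *
        g (homeomorphUnitSphereProd E x).2) := by
    have hx : 0 < ‖(x : E)‖ := norm_pos_iff.mpr x.2
    rw [homeomorphUnitSphereProd_apply_fst_coe, homeomorphUnitSphereProd_apply_snd_coe,
      hf _ (inv_pos.mpr hx), inv_pow]
    field_simp
  calc ∫ x, f x * g ‖x‖ ∂μ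
      = ∫ x : ({0}ᶜ : Set E), f x * g ‖(x : E)‖ ∂μ.comap Subtype.val := by
        rw [integral_subtype_comap (measurableSet_singleton _).compl fun x => f x * g ‖x‖,
          restrict_compl_singleton]
    _ = ∫ z : Metric.sphere (0 : E) 1 × Set.Ioi (0 : ℝ), f z.1 * ((z.2 : ℝ) ^ m * g z.2)
          ∂μ.toSphere.prod (.volumeIoiPow (Module.finrank ℝ E - 1)) := by
        simp_rw [hpolar]
        exact μ.measurePreserving_homeomorphUnitSphereProd.integral_comp
          (Homeomorph.measurableEmbedding _)
          fun z : Metric.sphere (0 : E) 1 × Set.Ioi (0 : ℝ) => f z.1 * ((z.2 : ℝ) ^ m * g z.2)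
    _ = _ := by
        rw [integral_prod_mul (fun ξ : Metric.sphere (0 : E) 1 => f ξ)
          (fun r : Set.Ioi (0 : ℝ) => (r : ℝ) ^ m * g r),
          integral_volumeIoiPow _ fun r => r ^ m * g r]
        simp only [pow_add, mul_assoc]

end Polar

section Sphere

lemma integral_Ioi_pow_mul_exp_neg_sq_div_two (k : ℕ) :
    ∫ r in Set.Ioi (0 : ℝ), r ^ k * Real.exp (-r ^ 2 / 2) =
      2 ^ (((k : ℝ) - 1) / 2) * Real.Gamma ((k + 1) / 2) := by
  have hk : (-1 : ℝ) < k := neg_one_lt_zero.trans_le k.cast_nonneg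
  have h := integral_rpow_mul_exp_neg_mul_rpow two_pos hk one_half_pos
  rw [one_div, Real.inv_rpow zero_le_two, ← Real.rpow_neg zero_le_two, ← Real.rpow_neg_one,
    ← Real.rpow_add two_pos] at h
  have hintegrand (r : ℝ) :
      r ^ k * Real.exp (-r ^ 2 / 2) = r ^ (k : ℝ) * Real.exp (-2 ^ (-1 : ℝ) * r ^ (2 : ℝ)) := by
    rw [Real.rpow_natCast, Real.rpow_two, Real.rpow_neg_one]
    ring_nf
  simp_rw [hintegrand, h]
  ring_nf

lemma Gamma_div_mul_integral_Ioi_pow_add_two_mul (k n : ℕ) :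
    Real.Gamma ((k + 1) / 2) / (2 ^ n * Real.Gamma ((k + 1) / 2 + n)) *
        ∫ r in Set.Ioi (0 : ℝ), r ^ (k + 2 * n) * Real.exp (-r ^ 2 / 2) =
      ∫ r in Set.Ioi (0 : ℝ), r ^ k * Real.exp (-r ^ 2 / 2) := by
  have hexp : (((k + 2 * n : ℕ) : ℝ) - 1) / 2 = ((k : ℝ) - 1) / 2 + n := by push_cast; ring
  have harg : (((k + 2 * n : ℕ) : ℝ) + 1) / 2 = ((k : ℝ) + 1) / 2 + n := by push_cast; ring
  have : 0 < Real.Gamma (((k : ℝ) + 1) / 2 + n) := Real.Gamma_pos_of_pos (by positivity)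
  rw [integral_Ioi_pow_mul_exp_neg_sq_div_two, integral_Ioi_pow_mul_exp_neg_sq_div_two, hexp,
    harg, Real.rpow_add two_pos, Real.rpow_natCast]
  field_simp

lemma eval_smul_of_isHomogeneous {σ R : Type*} [CommSemiring R] {n : ℕ} {p : MvPolynomial σ R}
    (hp : p.IsHomogeneous n) (r : R) (x : σ → R) : eval (r • x) p = r ^ n * eval x p := by
  rw [eval_eq, eval_eq, Finset.mul_sum]
  refine Finset.sum_congr rfl fun m hm => ?_
  have hdeg : ∏ i ∈ m.support, r ^ m i = r ^ n := by
    rw [Finset.prod_pow_eq_pow_sum, ← Finsupp.degree_apply, Finsupp.degree_eq_weight_one]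
    exact congrArg (r ^ ·) (hp (mem_support_iff.mp hm))
  simp_rw [Pi.smul_apply, smul_eq_mul, mul_pow, Finset.prod_mul_distrib, hdeg]
  exact mul_left_comm _ _ _

variable {σ : Type*} [Fintype σ]

lemma prod_gaussianPDFReal_eq_exp_norm_sq (x : EuclideanSpace ℝ σ) :
    ∏ i, gaussianPDFReal 0 1 (x i) =
      (√(2 * Real.pi))⁻¹ ^ Fintype.card σ * Real.exp (-‖x‖ ^ 2 / 2) := by
  simp [gaussianPDFReal, Finset.prod_mul_distrib, EuclideanSpace.norm_sq_eq, ← Real.exp_sum,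
    ← Finset.sum_div]

lemma dotProduct_ofLp (x y : EuclideanSpace ℝ σ) : x.ofLp ⬝ᵥ y.ofLp = ⟪x, y⟫ := by
  simp [EuclideanSpace.inner_eq_star_dotProduct, dotProduct_comm]

variable [Nonempty σ]

lemma gaussianExpectation_eq_integral_sphere_mul {m : ℕ} {p : MvPolynomial σ ℝ}
    (hp : p.IsHomogeneous m) :
    gaussianExpectation σ p =
      (∫ ξ : Metric.sphere (0 : EuclideanSpace ℝ σ) 1, eval (ξ : EuclideanSpace ℝ σ).ofLp p
          ∂(volume : Measure (EuclideanSpace ℝ σ)).toSphere) *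
        ((√(2 * Real.pi))⁻¹ ^ Fintype.card σ *
          ∫ r in Set.Ioi (0 : ℝ), r ^ (Fintype.card σ - 1 + m) * Real.exp (-r ^ 2 / 2)) := by
  calc gaussianExpectation σ p
      = ∫ x : EuclideanSpace ℝ σ, eval x.ofLp p * ∏ i, gaussianPDFReal 0 1 (x i) :=
        ((PiLp.volume_preserving_ofLp σ).integral_comp
          (MeasurableEquiv.toLp 2 (σ → ℝ)).symm.measurableEmbedding
          fun x => eval x p * ∏ i, gaussianPDFReal 0 1 (x i)).symm
    _ = ∫ x : EuclideanSpace ℝ σ, eval x.ofLp p *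
          ((√(2 * Real.pi))⁻¹ ^ Fintype.card σ * Real.exp (-‖x‖ ^ 2 / 2)) := by
        simp_rw [prod_gaussianPDFReal_eq_exp_norm_sq]
    _ = _ := by
        rw [integral_homogeneous_mul_fun_norm volume
            (fun r _ x => eval_smul_of_isHomogeneous hp r x.ofLp)
            fun r => (√(2 * Real.pi))⁻¹ ^ Fintype.card σ * Real.exp (-r ^ 2 / 2),
          finrank_euclideanSpace, ← integral_const_mul ((√(2 * Real.pi))⁻¹ ^ Fintype.card σ)]
        simp only [mul_left_comm]

lemma average_sphere_eval {n : ℕ} {p : MvPolynomial σ ℝ} (hp : p.IsHomogeneous (2 * n)) :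
    ⨍ ξ : Metric.sphere (0 : EuclideanSpace ℝ σ) 1, eval (ξ : EuclideanSpace ℝ σ).ofLp p
        ∂(volume : Measure (EuclideanSpace ℝ σ)).toSphere =
      Real.Gamma (Fintype.card σ / 2) / (2 ^ n * Real.Gamma (Fintype.card σ / 2 + n)) *
        gaussianExpectation σ p := by
  have hcard : ((Fintype.card σ - 1 : ℕ) + 1 : ℝ) = Fintype.card σ := by
    exact_mod_cast Nat.sub_add_cancel Fintype.card_pos
  have hradial := Gamma_div_mul_integral_Ioi_pow_add_two_mul (Fintype.card σ - 1) n
  rw [hcard] at hradial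
  have hone := gaussianExpectation_eq_integral_sphere_mul (isHomogeneous_one σ ℝ)
  rw [← C_1, gaussianExpectation_C] at hone
  simp only [eval_C, integral_const, smul_eq_mul, mul_one, add_zero] at hone
  have hA : (volume : Measure (EuclideanSpace ℝ σ)).toSphere.real Set.univ ≠ 0 :=
    left_ne_zero_of_mul (hone ▸ one_ne_zero)
  rw [average_eq, smul_eq_mul, inv_mul_eq_iff_eq_mul₀ hA,
    gaussianExpectation_eq_integral_sphere_mul hp]
  rw [← hradial] at hone
  linear_combination (∫ ξ : Metric.sphere (0 : EuclideanSpace ℝ σ) 1,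
    eval (ξ : EuclideanSpace ℝ σ).ofLp p
      ∂(volume : Measure (EuclideanSpace ℝ σ)).toSphere) * hone

lemma Gamma_div_two_pow_mul_Gamma_add {a : ℝ} (ha : 0 < a) (n : ℕ) :
    Real.Gamma (a / 2) / (2 ^ n * Real.Gamma (a / 2 + n)) =
      1 / ∏ k ∈ Finset.range n, (a + 2 * k) := by
  have hΓ (k : ℕ) : 0 < Real.Gamma (a / 2 + k) := Real.Gamma_pos_of_pos (by positivity)
  induction n with
  | zero => simpa using div_self (hΓ 0).ne'
  | succ n ih =>
    rw [Finset.prod_range_succ, ← one_div_mul_one_div, ← ih, Nat.cast_succ, ← add_assoc,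
      Real.Gamma_add_one (by positivity), pow_succ]
    field_simp

lemma integral_sphereUniform_prod_inner_sq {d n : ℕ} [Nonempty (Fin d)]
    (x : Fin n → EuclideanSpace ℝ (Fin d)) :
    ∫ ξ, ∏ i, ⟪x i, (ξ : EuclideanSpace ℝ (Fin d))⟫ ^ 2 ∂(sphereUniform d) =
      Real.Gamma (d / 2) / (2 ^ n * Real.Gamma (d / 2 + n)) * gaussianExpectation (Fin d)
        ((∏ i, linearForm (x i).ofLp) * ∏ i, linearForm (x i).ofLp) := by
  have hhom := isHomogeneous_prod_linearForm Finset.univ fun i => (x i).ofLp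
  have h := average_sphere_eval (n := n) (by simpa [two_mul] using hhom.mul hhom)
  rw [Fintype.card_fin] at h
  rw [← h, average]
  refine integral_congr_ae (.of_forall fun ξ => ?_)
  simp [eval_linearForm, dotProduct_ofLp, ← sq, Finset.prod_pow]

end Sphere

end SphereAverage

open SphereAverage

theorem sphere_average_prod_squares (d n : ℕ) (hd : 1 ≤ d)
    (x : Fin n → EuclideanSpace ℝ (Fin d)) (hx : ∀ i, ‖x i‖ = 1) :
    Real.Gamma (d / 2) / (2 ^ n * Real.Gamma (d / 2 + n))
        = 1 / ∏ k ∈ Finset.range n, ((d : ℝ) + 2 * k) ∧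
      Real.Gamma (d / 2) / (2 ^ n * Real.Gamma (d / 2 + n))
        ≤ ∫ ξ, ∏ i, ⟪x i, (ξ : EuclideanSpace ℝ (Fin d))⟫ ^ 2 ∂(sphereUniform d) ∧
      ((∫ ξ, ∏ i, ⟪x i, (ξ : EuclideanSpace ℝ (Fin d))⟫ ^ 2 ∂(sphereUniform d))
          = Real.Gamma (d / 2) / (2 ^ n * Real.Gamma (d / 2 + n))
        ↔ ∀ i j, i ≠ j → ⟪x i, x j⟫ = 0) := by
  have hd_pos : (0 : ℝ) < d := Nat.cast_pos.mpr hd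
  have : Nonempty (Fin d) := ⟨⟨0, hd⟩⟩
  have hunit (i : Fin n) : dotProduct (x i).ofLp (x i).ofLp = 1 := by
    rw [dotProduct_ofLp, real_inner_self_eq_norm_sq, hx, one_pow]
  have hconst : 0 < Real.Gamma (d / 2) / (2 ^ n * Real.Gamma (d / 2 + n)) := by
    rw [Gamma_div_two_pow_mul_Gamma_add hd_pos]
    positivity
  rw [integral_sphereUniform_prod_inner_sq]
  refine ⟨Gamma_div_two_pow_mul_Gamma_add hd_pos n, ?_, ?_⟩
  · exact le_mul_of_one_le_right hconst.le
      (one_le_gaussianExpectation_prod_linearForm_mul_self Finset.univ hunit)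
  · rw [mul_eq_left₀ hconst.ne', gaussianExpectation_prod_linearForm_mul_self_eq_one_iff hunit]
    simp [Set.Pairwise, dotProduct_ofLp]
end

section
/- For every positive integer n, n(n+2)(n+4)⋯(3n−2) < ((3√3/e) · n)^n, where the product on the left has n factors, the k-th factor being n + 2(k−1), and e is Euler's number. -/
open BigOperators

/-!
Twice the logarithm of the product is the left Riemann sum of `log` on `[n, 3n]` with mesh `2`.
Since `log` is strictly increasing, this sum is strictly below
`∫ u in n..3n, log u = n (2 log n + 3 log 3 - 2)`, which is twice the logarithm of the right-hand
side.
-/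

open Set

lemma sub_mul_lt_integral_of_strictMonoOn {f : ℝ → ℝ} {a b : ℝ} (hab : a < b)
    (hf : StrictMonoOn f (Icc a b)) : (b - a) * f a < ∫ u in a..b, f u := by
  have hint : IntervalIntegrable f MeasureTheory.volume a b :=
    MonotoneOn.intervalIntegrable (by simpa only [uIcc_of_le hab.le] using hf.monotoneOn)
  have hpos : 0 < ∫ u in a..b, (f u - f a) :=
    intervalIntegral.intervalIntegral_pos_of_pos_on (hint.sub intervalIntegrable_const)
      (fun u hu => sub_pos.mpr <|
        hf (left_mem_Icc.mpr hab.le) (Ioo_subset_Icc_self hu) hu.1) hab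
  rwa [intervalIntegral.integral_sub hint intervalIntegrable_const,
    intervalIntegral.integral_const, smul_eq_mul, sub_pos] at hpos

lemma sum_sub_mul_lt_integral_of_strictMonoOn {f : ℝ → ℝ} {t : ℕ → ℝ} {n : ℕ} (hn : n ≠ 0)
    (ht : StrictMono t) (hf : StrictMonoOn f (Icc (t 0) (t n))) :
    ∑ k ∈ Finset.range n, (t (k + 1) - t k) * f (t k) < ∫ u in t 0..t n, f u := by
  have hcell : ∀ k < n, StrictMonoOn f (Icc (t k) (t (k + 1))) := fun k hk =>
    hf.mono <| Icc_subset_Icc (ht.monotone k.zero_le) (ht.monotone hk)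
  have hint : ∀ k < n, IntervalIntegrable f MeasureTheory.volume (t k) (t (k + 1)) :=
    fun k hk => MonotoneOn.intervalIntegrable <| by
      simpa only [uIcc_of_le (ht k.lt_succ_self).le] using (hcell k hk).monotoneOn
  rw [← intervalIntegral.sum_integral_adjacent_intervals hint]
  exact Finset.sum_lt_sum_of_nonempty (Finset.nonempty_range_iff.mpr hn) fun k hk =>
    sub_mul_lt_integral_of_strictMonoOn (ht k.lt_succ_self) (hcell k (Finset.mem_range.mp hk))

lemma mul_sum_log_lt_integral_log {a d : ℝ} (ha : 0 < a) (hd : 0 < d) {n : ℕ} (hn : n ≠ 0) :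
    d * ∑ k ∈ Finset.range n, Real.log (a + d * k) < ∫ u in a..a + d * n, Real.log u := by
  have ht : StrictMono fun k : ℕ => a + d * k :=
    (Nat.strictMono_cast.const_mul hd).const_add a
  have hlog : StrictMonoOn Real.log (Icc (a + d * (0 : ℕ)) (a + d * n)) :=
    Real.strictMonoOn_log.mono fun u hu => ha.trans_le (by simpa using hu.1)
  have hstep (k : ℕ) : a + d * ((k + 1 : ℕ) : ℝ) - (a + d * k) = d := by push_cast; ring
  simpa only [hstep, ← Finset.mul_sum, Nat.cast_zero, mul_zero, add_zero]
    using sum_sub_mul_lt_integral_of_strictMonoOn hn ht hlog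

lemma integral_log_three_mul {x : ℝ} (hx : 0 < x) :
    ∫ u in x..3 * x, Real.log u = 2 * x * Real.log (3 * √3 / Real.exp 1 * x) := by
  rw [integral_log, Real.log_mul three_ne_zero hx.ne', Real.log_mul (by positivity) hx.ne',
    Real.log_div (by positivity) (Real.exp_ne_zero 1), Real.log_mul three_ne_zero (by positivity),
    Real.log_sqrt zero_le_three, Real.log_exp]
  ring

/-- For every positive integer `n`, `n(n+2)(n+4)⋯(3n−2) < ((3√3/e)·n)^n`. -/
theorem prod_lt_pow (n : ℕ) (hn : 1 ≤ n) :
    (∏ k ∈ Finset.range n, ((n : ℝ) + 2 * k))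
      < (3 * Real.sqrt 3 / Real.exp 1 * n) ^ n := by
  have hn₀ : (0 : ℝ) < n := by exact_mod_cast hn
  have hfactor (k : ℕ) : (0 : ℝ) < n + 2 * k := by positivity
  have hsum : 2 * ∑ k ∈ Finset.range n, Real.log (n + 2 * k)
      < 2 * n * Real.log (3 * √3 / Real.exp 1 * n) := calc
    _ < ∫ u in (n : ℝ)..n + 2 * n, Real.log u :=
      mul_sum_log_lt_integral_log hn₀ two_pos (Nat.one_le_iff_ne_zero.mp hn)
    _ = ∫ u in (n : ℝ)..3 * n, Real.log u := by congr 1; ring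
    _ = _ := integral_log_three_mul hn₀
  rw [← Real.log_lt_log_iff (Finset.prod_pos fun k _ => hfactor k) (by positivity),
    Real.log_prod fun k _ => (hfactor k).ne', Real.log_pow]
  linarith
end

section
/- Let A be a real antisymmetric n×n matrix and B a real symmetric positive definite n×n matrix, and suppose the eigenvalues of the real antisymmetric matrix B^{−1/2} A B^{−1/2} are a_1 √(−1), ..., a_n √(−1) with a_1, ..., a_n real. Then for every real λ, det [[−λA, B], [−B, A]] = (det B)² · ∏_{i=1}^n (1 + a_i² λ), where [[−λA, B], [−B, A]] denotes the 2n×2n block matrix with blocks −λA, B, −B, A. -/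
open Matrix BigOperators Polynomial

/-!
Factoring `diag(B, B)` out of the block matrix leaves `[[-λT, 1], [-1, T]]` with `T = B⁻¹A`, whose
determinant is `det (1 - λT²)`. As `B⁻¹ = R²`, the matrix `T` has the same characteristic polynomial
as `RAR`, so it remains to see that `det (1 - λT²) = ∏ᵢ (1 - λbᵢ²)` when `T` has eigenvalues `bᵢ`;
here `bᵢ² = -aᵢ²`. For `λ = μ²` this follows from `1 - μ²T² = (1 - μT)(1 + μT)`. Taking `μ` to be an
indeterminate, the identity becomes one of polynomials in `μ²` and so holds for every `λ`.
-/

lemma reverse_prod_X_sub_C {ι K : Type*} [CommRing K] (s : Finset ι) (b : ι → K) :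
    (∏ i ∈ s, (X - C (b i))).reverse = ∏ i ∈ s, (1 - C (b i) * X) := by
  classical
  nontriviality K
  induction s using Finset.induction_on with
  | empty => simp [← C_1, -map_one]
  | insert i s hi ih =>
    have hmonic := monic_prod_X_sub_C b s
    have hlinear : (X - C (b i)).reverse = 1 - C (b i) * X := by
      rw [sub_eq_add_neg, ← C_neg, reverse_add_C, ← one_mul (X : K[X]), reverse_mul_X]
      simp [← C_1, -map_one, sub_eq_add_neg]
    rw [Finset.prod_insert hi, Finset.prod_insert hi, reverse_mul, hlinear, ih]
    simp [hmonic.leadingCoeff]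

section SquareMatrix

variable {ι K : Type*} [Fintype ι] [DecidableEq ι] [CommRing K]

lemma eval_charpolyRev_eq_det (M : Matrix ι ι K) (c : K) :
    M.charpolyRev.eval c = (1 - c • M).det := by
  rw [charpolyRev, ← coe_evalRingHom, RingHom.map_det]
  congr 1
  ext i j
  simp [Matrix.one_apply, apply_ite (eval c), mul_comm c]

lemma expand_two_charpolyRev_sq (M : Matrix ι ι K) :
    expand K 2 (M ^ 2).charpolyRev = M.charpolyRev * M.charpolyRev.comp (-X) := by
  have hexpand : expand K 2 (M ^ 2).charpolyRev = (1 - (X : K[X]) ^ 2 • (M ^ 2).map C).det := by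
    rw [charpolyRev, AlgHom.map_det]
    congr 1
    ext1 i j
    simp [Matrix.one_apply, apply_ite (expand K 2)]
  have hcomp : M.charpolyRev.comp (-X) = (1 + (X : K[X]) • M.map C).det := by
    rw [charpolyRev, ← coe_compRingHom_apply, RingHom.map_det]
    congr 1
    ext1 i j
    simp [Matrix.one_apply, apply_ite (fun p : K[X] => p.comp (-X))]
  have hsq : (M ^ 2).map C = M.map C ^ 2 := map_pow C.mapMatrix M 2
  have hdiff (N : Matrix ι ι K[X]) : 1 - N ^ 2 = (1 - N) * (1 + N) := by noncomm_ring
  rw [hexpand, hcomp, charpolyRev, ← det_mul, hsq, ← _root_.smul_pow, hdiff]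

lemma charpolyRev_sq_eq_prod {M : Matrix ι ι K} {b : ι → K}
    (hM : M.charpoly = ∏ i, (X - C (b i))) :
    (M ^ 2).charpolyRev = ∏ i, (1 - C (b i ^ 2) * X) := by
  apply expand_injective two_pos
  rw [expand_two_charpolyRev_sq, ← reverse_charpoly, hM, reverse_prod_X_sub_C, prod_comp, map_prod,
    ← Finset.prod_mul_distrib]
  refine Finset.prod_congr rfl fun i _ => ?_
  simp only [sub_comp, one_comp, mul_comp, C_comp, X_comp, map_sub, map_one, map_mul, map_pow,
    expand_C, expand_X]
  ring

lemma det_one_sub_smul_sq_eq_prod {M : Matrix ι ι K} {b : ι → K}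
    (hM : M.charpoly = ∏ i, (X - C (b i))) (c : K) :
    (1 - c • M ^ 2).det = ∏ i, (1 - b i ^ 2 * c) := by
  rw [← eval_charpolyRev_eq_det, charpolyRev_sq_eq_prod hM, eval_prod]
  simp

lemma det_one_sub_smul_sq_eq_prod_of_map {L : Type*} [CommRing L] {f : K →+* L}
    (hf : Function.Injective f) {M : Matrix ι ι K} {a : ι → K} {j : L} (hj : j ^ 2 = -1)
    (hM : (M.map f).charpoly = ∏ i, (X - C (f (a i) * j))) (c : K) :
    (1 - c • M ^ 2).det = ∏ i, (1 + a i ^ 2 * c) := by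
  apply hf
  have hmap : f.mapMatrix (1 - c • M ^ 2) = 1 - f c • M.map f ^ 2 := by
    rw [map_sub, map_one, ← RingHom.mapMatrix_apply, ← map_pow]
    congr 1
    ext i k
    simp
  rw [RingHom.map_det, hmap, det_one_sub_smul_sq_eq_prod hM, map_prod]
  simp [mul_pow, hj]

lemma det_fromBlocks_zero_one_neg_one_zero :
    (fromBlocks 0 1 (-1) 0 : Matrix (ι ⊕ ι) (ι ⊕ ι) K).det = 1 := by
  have hshears : (fromBlocks 0 1 (-1) 0 : Matrix (ι ⊕ ι) (ι ⊕ ι) K)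
      = fromBlocks 1 1 0 1 * fromBlocks 1 0 (-1) 1 * fromBlocks 1 1 0 1 := by
    simp [fromBlocks_multiply]
  simp [hshears]

lemma det_fromBlocks_one_neg_one (M N : Matrix ι ι K) :
    (fromBlocks M 1 (-1) N).det = (1 + M * N).det := by
  have hfactor : fromBlocks M 1 (-1) N = fromBlocks 0 1 (-1) 0 * fromBlocks 1 (-N) M 1 := by
    simp [fromBlocks_multiply]
  rw [hfactor, det_mul, det_fromBlocks_zero_one_neg_one_zero, det_fromBlocks_one₁₁]
  simp

lemma det_fromBlocks_neg_smul_of_isUnit (A : Matrix ι ι K) {B : Matrix ι ι K} (hB : IsUnit B)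
    (c : K) :
    (fromBlocks (-(c • A)) B (-B) A).det = B.det ^ 2 * (1 - c • (B⁻¹ * A) ^ 2).det := by
  have hBA : B * (B⁻¹ * A) = A := mul_nonsing_inv_cancel_left B A ((isUnit_iff_isUnit_det B).mp hB)
  have hfactor : fromBlocks (-(c • A)) B (-B) A
      = fromBlocks B 0 0 B * fromBlocks (-(c • (B⁻¹ * A))) 1 (-1) (B⁻¹ * A) := by
    simp [fromBlocks_multiply, hBA]
  rw [hfactor, det_mul, det_fromBlocks_zero₂₁, det_fromBlocks_one_neg_one, neg_mul, smul_mul_assoc,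
    ← sq, ← sq, ← sub_eq_add_neg]

theorem det_block_eq_det_sq_mul_prod_general {L : Type*} [CommRing L] {f : K →+* L}
    (hf : Function.Injective f) {A B R : Matrix ι ι K} (hB : IsUnit B) (hR : R * R = B⁻¹)
    {a : ι → K} {j : L} (hj : j ^ 2 = -1)
    (ha : ((R * A * R).map f).charpoly = ∏ i, (X - C (f (a i) * j))) (c : K) :
    (fromBlocks (-(c • A)) B (-B) A).det = B.det ^ 2 * ∏ i, (1 + a i ^ 2 * c) := by
  have hcharpoly : (R * A * R).charpoly = (B⁻¹ * A).charpoly := by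
    rw [charpoly_mul_comm, ← mul_assoc, hR]
  rw [charpoly_map, hcharpoly, ← charpoly_map] at ha
  rw [det_fromBlocks_neg_smul_of_isUnit A hB, det_one_sub_smul_sq_eq_prod_of_map hf hj ha]

end SquareMatrix

/-- Let `A` be real antisymmetric, `B` real symmetric positive definite, and let `R`
be the inverse `B^{-1/2}` of the positive definite symmetric square root of `B`
(i.e. `R` is symmetric positive definite with `R * R = B⁻¹`). If the eigenvalues of
the real antisymmetric matrix `B^{-1/2} A B^{-1/2} = R * A * R` are
`a₁ √(−1), …, aₙ √(−1)`, then for every real `λ`,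
`det [[−λA, B], [−B, A]] = (det B)² ∏ᵢ (1 + aᵢ² λ)`. -/
theorem det_block_eq_det_sq_mul_prod (n : ℕ) (A B R : Matrix (Fin n) (Fin n) ℝ)
    (hA : Aᵀ = -A) (hBsymm : Bᵀ = B)
    (hBpd : ∀ x : Fin n → ℝ, x ≠ 0 → 0 < x ⬝ᵥ B *ᵥ x)
    (hRsymm : Rᵀ = R)
    (hRpd : ∀ x : Fin n → ℝ, x ≠ 0 → 0 < x ⬝ᵥ R *ᵥ x)
    (hR : R * R = B⁻¹)
    (a : Fin n → ℝ)
    (ha : ((R * A * R).map (Complex.ofReal)).charpoly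
      = ∏ i, (X - C ((a i : ℂ) * Complex.I))) :
    ∀ l : ℝ, (Matrix.fromBlocks (-(l • A)) B (-B) A).det
      = B.det ^ 2 * ∏ i, (1 + (a i) ^ 2 * l) := by
  have hB : B.PosDef := .of_dotProduct_mulVec_pos hBsymm hBpd
  exact det_block_eq_det_sq_mul_prod_general (f := Complex.ofRealHom) Complex.ofReal_injective
    hB.isUnit hR Complex.I_sq ha
end
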